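/- There is a universal constant C such that the following holds. Let (g_υ)_{υ∈ℝ^I} be a nice distribution of polynomials of degree at most k on ℝ^n, let 0 ≤ λ ≤ 1 and 0 < β' < 1. Then for x ∼ N(0,1)^n, except with probability at most β', we have E_υ[‖(g_υ)_{λ|x}‖₂²] ≥ (β'/(C·k))^{2k}·E_υ[‖g_υ‖₂²]. -/

import Mathlib

open MeasureTheory ProbabilityTheory MvPolynomial

/-- The standard Gaussian measure `N(0,1)^n` on `ℝ^n`. -/
noncomputable def gaussianN (n : ℕ) : Measure (Fin n → ℝ) :=
  Measure.pi fun _ => gaussianReal 0 1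

/-- The normalized probabilists' Hermite polynomial `h_k = H_k / √(k!)`. -/
noncomputable def hermiteFn (k : ℕ) (t : ℝ) : ℝ :=
  ((Polynomial.hermite k).map (Int.castRingHom ℝ)).eval t / Real.sqrt (Nat.factorial k)

/-- The multivariate Hermite polynomial `h_α(x) = ∏ i, h_{α i}(x i)`. -/
noncomputable def hermiteMv {n : ℕ} (α : Fin n → ℕ) (x : Fin n → ℝ) : ℝ :=
  ∏ i, hermiteFn (α i) (x i)

/-- Hermite coefficient `f̂(α) = E_{x ∼ N(0,1)^n}[f(x)·h_α(x)]` of a function. -/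
noncomputable def hermiteCoeffF {n : ℕ} (f : (Fin n → ℝ) → ℝ) (α : Fin n → ℕ) : ℝ :=
  ∫ x, f x * hermiteMv α x ∂(gaussianN n)

/-- Hermite coefficient `ĝ(α)` of a polynomial. -/
noncomputable def hermiteCoeff {n : ℕ} (g : MvPolynomial (Fin n) ℝ) (α : Fin n → ℕ) : ℝ :=
  hermiteCoeffF (fun x => eval x g) α

/-- The squared Gaussian 2-norm `‖g‖₂² = E_{x ∼ N(0,1)^n}[g(x)²]`. -/
noncomputable def norm2sq {n : ℕ} (g : MvPolynomial (Fin n) ℝ) : ℝ :=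
  ∫ x, (eval x g) ^ 2 ∂(gaussianN n)

/-- The `λ`-zoom of `g` at `x`: `g_{λ|x}(y) = g(√(1-λ)·x + √λ·y)`, as a polynomial in `y`. -/
noncomputable def zoom {n : ℕ} (g : MvPolynomial (Fin n) ℝ) (lam : ℝ) (x : Fin n → ℝ) :
    MvPolynomial (Fin n) ℝ :=
  aeval (fun i => C (Real.sqrt (1 - lam) * x i) + C (Real.sqrt lam) * X i) g

/-- `HyperVar_R[g^{≥m}] = Σ_{|α| ≥ m} R^{2|α|}·ĝ(α)²`. -/
noncomputable def hyperVarGE {n : ℕ} (R : ℝ) (m : ℕ) (g : MvPolynomial (Fin n) ℝ) : ℝ :=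
  ∑' α : Fin n → ℕ, if m ≤ ∑ i, α i then R ^ (2 * ∑ i, α i) * hermiteCoeff g α ^ 2 else 0

/-- `HyperVar_R[g] = Σ_{α ≠ 0} R^{2|α|}·ĝ(α)²`. -/
noncomputable def hyperVar {n : ℕ} (R : ℝ) (g : MvPolynomial (Fin n) ℝ) : ℝ :=
  hyperVarGE R 1 g

/-- A nice distribution of polynomials of degree at most `d` on `ℝ^n`, indexed by
`υ ∈ ℝ^I`: each `g υ` has degree at most `d` and each coefficient of `g υ` is a
polynomial of degree at most `d` in `υ`. -/
def NiceFamily (n I d : ℕ) (g : (Fin I → ℝ) → MvPolynomial (Fin n) ℝ) : Prop :=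
  (∀ υ, (g υ).totalDegree ≤ d) ∧
  ∀ m : Fin n →₀ ℕ, ∃ P : MvPolynomial (Fin I) ℝ,
    P.totalDegree ≤ d ∧ ∀ υ, coeff m (g υ) = eval υ P

/-! After averaging over `υ`, the squared norm of the zoom at `x` is a nonnegative polynomial in `x`
of degree at most `d = 2k`, whose Gaussian mean is, by rotation invariance, the average squared norm
of the family. So it suffices to show that such a polynomial `p` satisfies a small ball estimate of
Carbery–Wright type, `γ {p < τ ^ d * ∫ p} ≤ C * d * τ`.

Symmetrized in `y`, the restriction `s ↦ p (s x + √(1 - s²) y)` of `p` to an elliptic arc is a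
polynomial in `s`, and so its value at `0` is at most `2d + 3` times its integral over
`|s| ≤ 1 / 2`. Taking means in `y` bounds `∫ p` by the noise averages `∫ T_s p (x) ds`. Averaging
over `x` in the sublevel set `A` and moving `T_s` to the indicator of `A`, one is left with
`∫ p (t) ∫ T_s 1_A (t) ds dγ(t)`.
By Archimedes' hat-box theorem the inner integral is the mean area that `A` occupies, in
stereographic coordinates, on a random ellipsoid with pole `t`. On a line of the stereographic plane
`p` becomes, up to a bounded denominator, a polynomial of degree `2d` with leading coefficient
proportional to `p t`. Such a polynomial is small only on sets with small mean distance between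
their points, and the Blaschke–Petkantschin formula turns this into a bound for the area of `A`. -/

/-- The weight `√|u / v|`, truncated to the hyperbolic region `|u * v| < r`. After integration it
bounds the distance of two points of a polynomial sublevel set, `u` and `v` being their differences
with a root. -/
noncomputable def hyperbolicKernel (r u v : ℝ) : ℝ :=
  if |u * v| < r then √|u / v| else 0

lemma hyperbolicKernel_nonneg (r u v : ℝ) : 0 ≤ hyperbolicKernel r u v := by
  unfold hyperbolicKernel
  positivity

@[fun_prop]
lemma measurable_hyperbolicKernel {α : Type*} [MeasurableSpace α] {f g : α → ℝ}
    (hf : Measurable f) (hg : Measurable g) (r : ℝ) :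
    Measurable fun a => hyperbolicKernel r (f a) (g a) := by
  unfold hyperbolicKernel
  exact Measurable.ite (measurableSet_lt (by fun_prop) (by fun_prop)) (by fun_prop) (by fun_prop)

lemma lintegral_Ioc_inv_sqrt {a : ℝ} (ha : 0 ≤ a) :
    ∫⁻ v in Set.Ioc 0 a, ENNReal.ofReal (√v)⁻¹ = ENNReal.ofReal (2 * √a) := by
  have hrpow : ∀ v ∈ Set.Ioc 0 a, (√v)⁻¹ = v ^ (-(1 / 2) : ℝ) := fun v hv => by
    rw [Real.rpow_neg hv.1.le, Real.sqrt_eq_rpow]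
  have hint : IntegrableOn (fun v : ℝ => v ^ (-(1 / 2) : ℝ)) (Set.Ioc 0 a) := by
    rw [← intervalIntegrable_iff_integrableOn_Ioc_of_le ha]
    exact intervalIntegral.intervalIntegrable_rpow' (by norm_num)
  rw [setLIntegral_congr_fun measurableSet_Ioc fun v hv => by rw [hrpow v hv],
    ← ofReal_integral_eq_lintegral_ofReal hint
      ((ae_restrict_iff' measurableSet_Ioc).2 (.of_forall fun v hv => Real.rpow_nonneg hv.1.le _)),
    ← intervalIntegral.integral_of_le ha, integral_rpow (by norm_num)]
  congr 1
  rw [Real.sqrt_eq_rpow, Real.zero_rpow (by norm_num)]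
  norm_num
  ring

lemma lintegral_abs_lt_inv_sqrt_le {a : ℝ} (ha : 0 ≤ a) :
    ∫⁻ v in {v : ℝ | |v| < a}, ENNReal.ofReal (√|v|)⁻¹ ≤ ENNReal.ofReal (4 * √a) := by
  set g : ℝ → ENNReal := (Set.Ioc 0 a).indicator fun v => ENNReal.ofReal (√v)⁻¹ with hg
  have hgm : Measurable g := Measurable.indicator (by fun_prop) measurableSet_Ioc
  have hle : ∀ v : ℝ, {v : ℝ | |v| < a}.indicator (fun v => ENNReal.ofReal (√|v|)⁻¹) v ≤
      g v + g (-v) := by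
    refine fun v => Set.indicator_apply_le' (fun hv => ?_) fun _ => zero_le
    have hv' := abs_lt.1 (show |v| < a from hv)
    rcases lt_trichotomy v 0 with h | rfl | h
    · rw [hg, Set.indicator_of_mem (show -v ∈ Set.Ioc 0 a from ⟨by linarith, by linarith⟩),
        abs_of_neg h]
      exact le_add_self
    · simp
    · rw [hg, Set.indicator_of_mem (show v ∈ Set.Ioc 0 a from ⟨h, hv'.2.le⟩), abs_of_pos h]
      exact le_self_add
  calc ∫⁻ v in {v : ℝ | |v| < a}, ENNReal.ofReal (√|v|)⁻¹
      = ∫⁻ v, {v : ℝ | |v| < a}.indicator (fun v => ENNReal.ofReal (√|v|)⁻¹) v :=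
        (lintegral_indicator (measurableSet_lt (by fun_prop) (by fun_prop)) _).symm
    _ ≤ ∫⁻ v, (g v + g (-v)) := lintegral_mono hle
    _ = ENNReal.ofReal (2 * √a) + ENNReal.ofReal (2 * √a) := by
        rw [lintegral_add_left hgm, lintegral_neg_eq_self, hg,
          lintegral_indicator measurableSet_Ioc, lintegral_Ioc_inv_sqrt ha]
    _ = ENNReal.ofReal (4 * √a) := by
        rw [← ENNReal.ofReal_add (by positivity) (by positivity)]
        ring_nf

lemma lintegral_hyperbolicKernel_le {r : ℝ} (hr : 0 ≤ r) (u : ℝ) :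
    ∫⁻ v, ENNReal.ofReal (hyperbolicKernel r u v) ≤ ENNReal.ofReal (4 * √r) := by
  rcases eq_or_ne u 0 with rfl | hu
  · simp [hyperbolicKernel]
  have hu' : 0 < |u| := abs_pos.2 hu
  have hkernel : ∀ v, ENNReal.ofReal (hyperbolicKernel r u v) = ENNReal.ofReal √|u| *
      {v : ℝ | |v| < r / |u|}.indicator (fun v => ENNReal.ofReal (√|v|)⁻¹) v := fun v => by
    have hiff : |u * v| < r ↔ |v| < r / |u| := by rw [lt_div_iff₀ hu', abs_mul, mul_comm]
    by_cases hv : |v| < r / |u|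
    · rw [hyperbolicKernel, if_pos (hiff.2 hv), Set.indicator_of_mem (by exact hv),
        ← ENNReal.ofReal_mul (by positivity), abs_div, Real.sqrt_div (abs_nonneg _),
        div_eq_mul_inv]
    · rw [hyperbolicKernel, if_neg (hiff.not.2 hv), Set.indicator_of_notMem (by exact hv),
        ENNReal.ofReal_zero, mul_zero]
  calc ∫⁻ v, ENNReal.ofReal (hyperbolicKernel r u v)
      = ENNReal.ofReal √|u| * ∫⁻ v in {v : ℝ | |v| < r / |u|}, ENNReal.ofReal (√|v|)⁻¹ := by
        rw [lintegral_congr hkernel, lintegral_const_mul' _ _ ENNReal.ofReal_ne_top,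
          lintegral_indicator (measurableSet_lt (by fun_prop) (by fun_prop))]
    _ ≤ ENNReal.ofReal √|u| * ENNReal.ofReal (4 * √(r / |u|)) := by
        gcongr
        exact lintegral_abs_lt_inv_sqrt_le (by positivity)
    _ = ENNReal.ofReal (4 * √r) := by
        rw [← ENNReal.ofReal_mul (by positivity), mul_left_comm, ← Real.sqrt_mul (by positivity),
          mul_div_cancel₀ _ hu'.ne']

/- Numbers with product at most one have `c ^ (-1/2)` at least one on average, and the terms with
`4 ≤ c` contribute at most half of that average. -/
lemma card_le_two_mul_sum_inv_sqrt {ι : Type*} [Fintype ι] {c : ι → ℝ} (hc : ∀ j, 0 < c j)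
    (hprod : ∏ j, c j ≤ 1) :
    (Fintype.card ι : ℝ) ≤ 2 * ∑ j, if c j < 4 then (√(c j))⁻¹ else 0 := by
  rcases isEmpty_or_nonempty ι with hι | hι
  · simp
  have hN : (0 : ℝ) < Fintype.card ι := by exact_mod_cast Fintype.card_pos
  have hone : 1 ≤ ∏ j, (√(c j))⁻¹ := by
    rw [Finset.prod_inv_distrib, ← Real.sqrt_prod _ fun j _ => (hc j).le]
    exact (one_le_inv₀ (Real.sqrt_pos.2 (Finset.prod_pos fun j _ => hc j))).2
      (Real.sqrt_le_one.2 hprod)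
  have hamgm : (Fintype.card ι : ℝ) ≤ ∑ j, (√(c j))⁻¹ := by
    have h := Real.geom_mean_le_arith_mean Finset.univ (fun _ : ι => 1) (fun j => (√(c j))⁻¹)
      (fun _ _ => zero_le_one) (by simpa using hN) fun _ _ => by positivity
    simp only [Real.rpow_one, one_mul, Finset.sum_const, Finset.card_univ, nsmul_eq_mul,
      mul_one] at h
    have := (Real.one_le_rpow hone (inv_nonneg.2 hN.le)).trans h
    rwa [one_le_div hN] at this
  have hterm : ∀ j, (√(c j))⁻¹ ≤ (if c j < 4 then (√(c j))⁻¹ else 0) + 1 / 2 := fun j => by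
    split_ifs with h
    · linarith
    · have : 2 ≤ √(c j) := Real.le_sqrt_of_sq_le (by linarith)
      rw [zero_add, ← one_div]
      gcongr
  have hsum := hamgm.trans (Finset.sum_le_sum fun j _ => hterm j)
  rw [Finset.sum_add_distrib, Finset.sum_const, Finset.card_univ, nsmul_eq_mul] at hsum
  linarith

lemma abs_sub_mul_inv_sqrt_le_hyperbolicKernel {δ u v : ℝ} (hδ : 0 < δ) (hu : u ≠ 0)
    (hv : v ≠ 0) :
    |u - v| * (if |u * v| / δ ^ 2 < 4 then (√(|u * v| / δ ^ 2))⁻¹ else 0) ≤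
      δ * (hyperbolicKernel (4 * δ ^ 2) u v + hyperbolicKernel (4 * δ ^ 2) v u) := by
  have : 0 < √|u| := Real.sqrt_pos.2 (abs_pos.2 hu)
  have : 0 < √|v| := Real.sqrt_pos.2 (abs_pos.2 hv)
  unfold hyperbolicKernel
  simp only [mul_comm v u, div_lt_iff₀ (sq_pos_of_pos hδ)]
  split_ifs with h
  · rw [Real.sqrt_div (abs_nonneg _), Real.sqrt_sq hδ.le, abs_mul, abs_div, abs_div,
      Real.sqrt_mul (abs_nonneg _), Real.sqrt_div (abs_nonneg _), Real.sqrt_div (abs_nonneg _)]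
    calc |u - v| * (√|u| * √|v| / δ)⁻¹
        ≤ (√|u| ^ 2 + √|v| ^ 2) * (√|u| * √|v| / δ)⁻¹ := by
          rw [Real.sq_sqrt (abs_nonneg _), Real.sq_sqrt (abs_nonneg _)]
          gcongr
          exact abs_sub u v
      _ = δ * (√|u| / √|v| + √|v| / √|u|) := by field_simp
  · simp

lemma abs_sub_le_sum_hyperbolicKernel {ι : Type*} [Fintype ι] [Nonempty ι] {x : ι → ℝ}
    {δ s t : ℝ} (hδ : 0 < δ) (hs : ∀ j, s ≠ x j) (ht : ∀ j, t ≠ x j)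
    (hs' : ∏ j, |s - x j| ≤ δ ^ Fintype.card ι) (ht' : ∏ j, |t - x j| ≤ δ ^ Fintype.card ι) :
    |s - t| ≤ 2 * δ / Fintype.card ι * ∑ j, (hyperbolicKernel (4 * δ ^ 2) (s - x j) (t - x j) +
      hyperbolicKernel (4 * δ ^ 2) (t - x j) (s - x j)) := by
  have hN : (0 : ℝ) < Fintype.card ι := by exact_mod_cast Fintype.card_pos
  have hcard := card_le_two_mul_sum_inv_sqrt
    (c := fun j => |(s - x j) * (t - x j)| / δ ^ 2)
    (fun j => div_pos (abs_pos.2 (mul_ne_zero (sub_ne_zero.2 (hs j)) (sub_ne_zero.2 (ht j))))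
      (by positivity)) (by
      simp only [abs_mul, Finset.prod_div_distrib, Finset.prod_mul_distrib, Finset.prod_const,
        Finset.card_univ]
      rw [div_le_one (by positivity), pow_right_comm, sq]
      exact mul_le_mul hs' ht' (Finset.prod_nonneg fun j _ => abs_nonneg _) (by positivity))
  rw [div_mul_eq_mul_div, le_div_iff₀ hN]
  calc |s - t| * Fintype.card ι
      ≤ |s - t| * (2 * ∑ j, if |(s - x j) * (t - x j)| / δ ^ 2 < 4 then
          (√(|(s - x j) * (t - x j)| / δ ^ 2))⁻¹ else 0) := by gcongr
    _ = 2 * ∑ j, |(s - x j) - (t - x j)| * if |(s - x j) * (t - x j)| / δ ^ 2 < 4 then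
          (√(|(s - x j) * (t - x j)| / δ ^ 2))⁻¹ else 0 := by
        rw [mul_left_comm, Finset.mul_sum]
        simp only [sub_sub_sub_cancel_right]
    _ ≤ 2 * ∑ j, δ * (hyperbolicKernel (4 * δ ^ 2) (s - x j) (t - x j) +
          hyperbolicKernel (4 * δ ^ 2) (t - x j) (s - x j)) := by
        refine mul_le_mul_of_nonneg_left (Finset.sum_le_sum fun j _ => ?_) zero_le_two
        exact abs_sub_mul_inv_sqrt_le_hyperbolicKernel hδ (sub_ne_zero.2 (hs j))
          (sub_ne_zero.2 (ht j))
    _ = _ := by rw [← Finset.mul_sum, mul_assoc]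

lemma setLIntegral_prod_hyperbolicKernel_le {r : ℝ} (hr : 0 ≤ r) (x : ℝ) (E : Set ℝ) :
    ∫⁻ z in E ×ˢ E, ENNReal.ofReal (hyperbolicKernel r (z.1 - x) (z.2 - x)) ≤
      ENNReal.ofReal (4 * √r) * volume E := by
  rw [Measure.volume_eq_prod, ← Measure.prod_restrict,
    lintegral_prod _ (Measurable.aemeasurable (by fun_prop))]
  calc ∫⁻ s in E, ∫⁻ t in E, ENNReal.ofReal (hyperbolicKernel r (s - x) (t - x))
      ≤ ∫⁻ _ in E, ENNReal.ofReal (4 * √r) := by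
        refine lintegral_mono fun s => (setLIntegral_le_lintegral _ _).trans ?_
        rw [lintegral_sub_right_eq_self
          (fun t => ENNReal.ofReal (hyperbolicKernel r (s - x) t)) x]
        exact lintegral_hyperbolicKernel_le hr _
    _ = ENNReal.ofReal (4 * √r) * volume E := setLIntegral_const _ _

lemma setLIntegral_prod_hyperbolicKernel_add_swap_le {r : ℝ} (hr : 0 ≤ r) (x : ℝ) (E : Set ℝ) :
    ∫⁻ z in E ×ˢ E, (ENNReal.ofReal (hyperbolicKernel r (z.1 - x) (z.2 - x)) +
        ENNReal.ofReal (hyperbolicKernel r (z.2 - x) (z.1 - x))) ≤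
      ENNReal.ofReal (8 * √r) * volume E := by
  have hswap : ∫⁻ z in E ×ˢ E, ENNReal.ofReal (hyperbolicKernel r (z.2 - x) (z.1 - x)) =
      ∫⁻ z in E ×ˢ E, ENNReal.ofReal (hyperbolicKernel r (z.1 - x) (z.2 - x)) := by
    rw [Measure.volume_eq_prod, ← Measure.prod_restrict]
    exact lintegral_prod_swap fun z =>
      ENNReal.ofReal (hyperbolicKernel r (z.1 - x) (z.2 - x))
  rw [lintegral_add_left (by fun_prop), hswap]
  refine (add_le_add (setLIntegral_prod_hyperbolicKernel_le hr x E)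
    (setLIntegral_prod_hyperbolicKernel_le hr x E)).trans_eq ?_
  rw [← add_mul, ← ENNReal.ofReal_add (by positivity) (by positivity)]
  ring_nf

lemma ae_fst_ne_and_snd_ne (x : ℝ) : ∀ᵐ z : ℝ × ℝ, z.1 ≠ x ∧ z.2 ≠ x := by
  have hne : ∀ᵐ s : ℝ, s ≠ x := compl_mem_ae_iff.2 (measure_singleton x)
  exact ((Measure.quasiMeasurePreserving_fst (μ := volume) (ν := volume)).ae hne).and
    ((Measure.quasiMeasurePreserving_snd (μ := volume) (ν := volume)).ae hne)

lemma setLIntegral_abs_sub_le_of_prod_le {ι : Type*} [Fintype ι] [Nonempty ι] (x : ι → ℝ) {δ : ℝ}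
    (hδ : 0 < δ) {E : Set ℝ} (hE : MeasurableSet E)
    (h : ∀ s ∈ E, ∏ j, |s - x j| ≤ δ ^ Fintype.card ι) :
    ∫⁻ z in E ×ˢ E, ENNReal.ofReal |z.1 - z.2| ≤ ENNReal.ofReal (32 * δ ^ 2) * volume E := by
  have : (0 : ℝ) < Fintype.card ι := by exact_mod_cast Fintype.card_pos
  let k (j : ι) (z : ℝ × ℝ) : ENNReal :=
    ENNReal.ofReal (hyperbolicKernel (4 * δ ^ 2) (z.1 - x j) (z.2 - x j)) +
      ENNReal.ofReal (hyperbolicKernel (4 * δ ^ 2) (z.2 - x j) (z.1 - x j))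
  have hk (j : ι) : ∫⁻ z in E ×ˢ E, k j z ≤ ENNReal.ofReal (16 * δ) * volume E := by
    refine (setLIntegral_prod_hyperbolicKernel_add_swap_le (by positivity) (x j) E).trans_eq ?_
    rw [show 4 * δ ^ 2 = (2 * δ) ^ 2 by ring, Real.sqrt_sq (by positivity)]
    ring_nf
  calc ∫⁻ z in E ×ˢ E, ENNReal.ofReal |z.1 - z.2|
      ≤ ∫⁻ z in E ×ˢ E, ENNReal.ofReal (2 * δ / Fintype.card ι) * ∑ j, k j z := by
        refine lintegral_mono_ae ?_
        filter_upwards [ae_restrict_mem (hE.prod hE),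
          ae_restrict_of_ae (ae_all_iff.2 fun j => ae_fst_ne_and_snd_ne (x j))] with z hz hne
        refine (ENNReal.ofReal_le_ofReal (abs_sub_le_sum_hyperbolicKernel hδ
          (fun j => (hne j).1) (fun j => (hne j).2) (h _ hz.1) (h _ hz.2))).trans_eq ?_
        rw [ENNReal.ofReal_mul (by positivity), ENNReal.ofReal_sum_of_nonneg fun j _ =>
          add_nonneg (hyperbolicKernel_nonneg _ _ _) (hyperbolicKernel_nonneg _ _ _)]
        simp only [ENNReal.ofReal_add (hyperbolicKernel_nonneg _ _ _)
          (hyperbolicKernel_nonneg _ _ _), k]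
    _ = ENNReal.ofReal (2 * δ / Fintype.card ι) * ∑ j, ∫⁻ z in E ×ˢ E, k j z := by
        rw [lintegral_const_mul' _ _ ENNReal.ofReal_ne_top,
          lintegral_finsetSum _ fun j _ => by fun_prop]
    _ ≤ ENNReal.ofReal (2 * δ / Fintype.card ι) *
          ∑ _j : ι, ENNReal.ofReal (16 * δ) * volume E := by
        gcongr with j
        exact hk j
    _ = ENNReal.ofReal (32 * δ ^ 2) * volume E := by
        rw [Finset.sum_const, Finset.card_univ, nsmul_eq_mul, ← ENNReal.ofReal_natCast,
          ← mul_assoc, ← mul_assoc, ← ENNReal.ofReal_mul (by positivity),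
          ← ENNReal.ofReal_mul (by positivity)]
        congr 2
        field_simp
        ring

open Classical in
lemma abs_eval_eq_coeff_mul_prod_norm_sub_roots {R : Polynomial ℝ} (hR : 0 ≤ R.leadingCoeff)
    (s : ℝ) : |R.eval s| =
      R.leadingCoeff * ∏ z : (R.map Complex.ofRealHom).roots, ‖(s : ℂ) - z.1‖ := by
  have hsplits : (R.map Complex.ofRealHom).Splits := IsAlgClosed.splits _
  have heval : ((R.eval s : ℝ) : ℂ) = (R.map Complex.ofRealHom).eval (s : ℂ) :=
    (Polynomial.eval_map_apply (f := Complex.ofRealHom) (p := R) s).symm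
  rw [← Real.norm_eq_abs, ← Complex.norm_real, heval, hsplits.eval_eq_prod_roots, norm_mul,
    Polynomial.leadingCoeff_map, Complex.ofRealHom_eq_coe, Complex.norm_real,
    Real.norm_of_nonneg hR,
    ← Multiset.map_univ _ fun z => (s : ℂ) - z, ← Finset.prod_eq_multiset_prod, norm_prod]

open Classical in
lemma setLIntegral_abs_sub_le_of_abs_eval_le {N : ℕ} (hN : 0 < N) {R : Polynomial ℝ}
    (hR : R.natDegree ≤ N) (hc : 0 < R.coeff N) {δ : ℝ} (hδ : 0 < δ)
    {E : Set ℝ} (hE : MeasurableSet E) (h : ∀ s ∈ E, |R.eval s| ≤ R.coeff N * δ ^ N) :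
    ∫⁻ z in E ×ˢ E, ENNReal.ofReal |z.1 - z.2| ≤ ENNReal.ofReal (32 * δ ^ 2) * volume E := by
  have hdeg : R.natDegree = N := hR.antisymm (Polynomial.le_natDegree_of_ne_zero hc.ne')
  have hlead : R.leadingCoeff = R.coeff N := by rw [Polynomial.leadingCoeff, hdeg]
  have hcard : Fintype.card (R.map Complex.ofRealHom).roots = N := by
    rw [Multiset.card_coe, ← (IsAlgClosed.splits (R.map Complex.ofRealHom)).natDegree_eq_card_roots,
      Polynomial.natDegree_map, hdeg]
  have : Nonempty (R.map Complex.ofRealHom).roots := Fintype.card_pos_iff.1 (hcard ▸ hN)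
  refine setLIntegral_abs_sub_le_of_prod_le
    (fun z : (R.map Complex.ofRealHom).roots => z.1.re) hδ hE fun s hs => ?_
  have hprod := h s hs
  rw [abs_eval_eq_coeff_mul_prod_norm_sub_roots (hlead ▸ hc.le), hlead,
    mul_le_mul_iff_right₀ hc] at hprod
  rw [hcard]
  refine (Finset.prod_le_prod (fun _ _ => abs_nonneg _) fun z _ => ?_).trans hprod
  simpa using Complex.abs_re_le_norm ((s : ℂ) - z.1)

lemma lintegral_eq_ofReal_mul_lintegral_add_mul (F : ℝ → ENNReal) (y : ℝ) {r : ℝ} (hr : r ≠ 0) :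
    ∫⁻ z, F z = ENNReal.ofReal |r| * ∫⁻ m, F (y + m * r) := by
  conv_lhs => rw [← lintegral_add_left_eq_self F y, ← Real.smul_map_volume_mul_right hr]
  rw [lintegral_smul_measure, smul_eq_mul]
  congr 1
  exact lintegral_map_equiv (fun z => F (y + z)) (Homeomorph.mulRight₀ r hr).toMeasurableEquiv

lemma lintegral_mul_lintegral_eq_lintegral_lines {f : ℝ × ℝ → ENNReal} (hf : Measurable f)
    {s t : ℝ} (hst : s ≠ t) :
    (∫⁻ y, f (s, y)) * ∫⁻ y, f (t, y) =
      ∫⁻ q : ℝ × ℝ, ENNReal.ofReal |s - t| * (f (s, q.2 + q.1 * s) * f (t, q.2 + q.1 * t)) := by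
  have hne : t - s ≠ 0 := sub_ne_zero.2 hst.symm
  calc (∫⁻ y, f (s, y)) * ∫⁻ y, f (t, y)
      = ∫⁻ y, f (s, y) * ∫⁻ z, f (t, z) := by
        rw [lintegral_mul_const _ (by fun_prop)]
    _ = ∫⁻ y, ∫⁻ m, ENNReal.ofReal |s - t| * (f (s, y) * f (t, y + m * (t - s))) := by
        refine lintegral_congr fun y => ?_
        rw [lintegral_eq_ofReal_mul_lintegral_add_mul (fun z => f (t, z)) y hne, abs_sub_comm,
          lintegral_const_mul' _ _ ENNReal.ofReal_ne_top, lintegral_const_mul _ (by fun_prop)]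
        ring
    _ = ∫⁻ m, ∫⁻ y, ENNReal.ofReal |s - t| * (f (s, y) * f (t, y + m * (t - s))) :=
        lintegral_lintegral_swap (by fun_prop)
    _ = ∫⁻ m, ∫⁻ c, ENNReal.ofReal |s - t| * (f (s, c + m * s) * f (t, c + m * t)) := by
        refine lintegral_congr fun m => ?_
        rw [← lintegral_add_right_eq_self _ (m * s)]
        simp only [add_assoc, mul_sub, add_sub_cancel]
    _ = _ := by rw [Measure.volume_eq_prod, lintegral_prod _ (by fun_prop)]

/- The Blaschke–Petkantschin formula of the plane: a pair of points is parametrized by the line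
`y = c + m * x` through them and their two abscissas, with Jacobian `|s - t|`. -/
lemma lintegral_mul_lintegral_eq_lintegral_line_pairs {f : ℝ × ℝ → ENNReal} (hf : Measurable f) :
    (∫⁻ z, f z) * ∫⁻ z, f z = ∫⁻ q : ℝ × ℝ, ∫⁻ p : ℝ × ℝ,
      ENNReal.ofReal |p.1 - p.2| * (f (p.1, q.2 + q.1 * p.1) * f (p.2, q.2 + q.1 * p.2)) := by
  have hslices : Measurable fun s => ∫⁻ y, f (s, y) := hf.lintegral_prod_right'
  have hdiag : ∀ᵐ p : ℝ × ℝ, p.1 ≠ p.2 := by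
    rw [Measure.volume_eq_prod, Measure.ae_prod_iff_ae_ae]
    · refine .of_forall fun s => ?_
      filter_upwards [compl_mem_ae_iff.2 (measure_singleton s)] with t ht using Ne.symm ht
    · exact (measurableSet_eq_fun measurable_fst measurable_snd).compl
  calc (∫⁻ z, f z) * ∫⁻ z, f z
      = ∫⁻ p : ℝ × ℝ, (∫⁻ y, f (p.1, y)) * ∫⁻ y, f (p.2, y) := by
        rw [Measure.volume_eq_prod, lintegral_prod_mul hslices.aemeasurable hslices.aemeasurable,
          lintegral_prod _ hf.aemeasurable]
    _ = ∫⁻ p : ℝ × ℝ, ∫⁻ q : ℝ × ℝ,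
          ENNReal.ofReal |p.1 - p.2| * (f (p.1, q.2 + q.1 * p.1) * f (p.2, q.2 + q.1 * p.2)) :=
        lintegral_congr_ae (hdiag.mono fun p hp => lintegral_mul_lintegral_eq_lintegral_lines hf hp)
    _ = _ := lintegral_lintegral_swap (by fun_prop)

lemma lintegral_ofReal_div_one_add_sq {K : ℝ} (hK : 0 ≤ K) :
    ∫⁻ m : ℝ, ENNReal.ofReal (K / (1 + m ^ 2)) = ENNReal.ofReal (K * Real.pi) := by
  simp only [div_eq_mul_inv]
  rw [← ofReal_integral_eq_lintegral_ofReal (integrable_inv_one_add_sq.const_mul K)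
    (.of_forall fun m => by positivity), integral_const_mul, integral_univ_inv_one_add_sq]

lemma lintegral_mul_volume_line_slice {A : Set (ℝ × ℝ)} (hA : MeasurableSet A) {w : ℝ → ENNReal}
    (hw : Measurable w) :
    ∫⁻ q : ℝ × ℝ, w q.1 * volume {s | (s, q.2 + q.1 * s) ∈ A} = (∫⁻ m, w m) * volume A := by
  have hline : Measurable fun z : (ℝ × ℝ) × ℝ => (z.2, z.1.2 + z.1.1 * z.2) := by fun_prop
  have hslice : Measurable fun q : ℝ × ℝ => volume {s | (s, q.2 + q.1 * s) ∈ A} :=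
    measurable_measure_prodMk_left (hline hA)
  rw [Measure.volume_eq_prod, lintegral_prod _ (by fun_prop), ← lintegral_mul_const _ hw]
  refine lintegral_congr fun m => ?_
  have hshear : Measurable fun z : ℝ × ℝ => (z.2, z.1 + m * z.2) := by fun_prop
  have hslices : ∫⁻ c, volume {s | (s, c + m * s) ∈ A} = volume.prod volume A := by
    calc ∫⁻ c, volume {s | (s, c + m * s) ∈ A}
        = volume.prod volume ((fun z : ℝ × ℝ => (z.2, z.1 + m * z.2)) ⁻¹' A) :=
          (Measure.prod_apply (hshear hA)).symm
      _ = ∫⁻ s, volume {c | (s, c + m * s) ∈ A} := Measure.prod_apply_symm (hshear hA)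
      _ = ∫⁻ s, volume {c | (s, c) ∈ A} := lintegral_congr fun s =>
          measure_preimage_add_right volume (m * s) {c | (s, c) ∈ A}
      _ = volume.prod volume A := (Measure.prod_apply hA).symm
  exact (lintegral_const_mul _ (hslice.comp measurable_prodMk_left)).trans
    (congrArg (w m * ·) hslices)

lemma volume_le_of_forall_line_slice {A : Set (ℝ × ℝ)} (hA : MeasurableSet A) (hfin : volume A ≠ ⊤)
    {K : ℝ} (hK : 0 ≤ K)
    (h : ∀ m c : ℝ, ∫⁻ z in {s | (s, c + m * s) ∈ A} ×ˢ {s | (s, c + m * s) ∈ A},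
      ENNReal.ofReal |z.1 - z.2| ≤
        ENNReal.ofReal (K / (1 + m ^ 2)) * volume {s | (s, c + m * s) ∈ A}) :
    volume A ≤ ENNReal.ofReal (K * Real.pi) := by
  set slice : ℝ × ℝ → Set ℝ := fun q => {s | (s, q.2 + q.1 * s) ∈ A} with hslice
  have hmeas : ∀ q, MeasurableSet (slice q) := fun q =>
    (show Measurable fun s : ℝ => (s, q.2 + q.1 * s) by fun_prop) hA
  have hpair : ∀ q : ℝ × ℝ, ∫⁻ p : ℝ × ℝ, ENNReal.ofReal |p.1 - p.2| *
      (A.indicator 1 (p.1, q.2 + q.1 * p.1) * A.indicator 1 (p.2, q.2 + q.1 * p.2)) =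
      ∫⁻ p in slice q ×ˢ slice q, ENNReal.ofReal |p.1 - p.2| := fun q => by
    rw [← lintegral_indicator ((hmeas q).prod (hmeas q))]
    refine lintegral_congr fun p => ?_
    by_cases h1 : (p.1, q.2 + q.1 * p.1) ∈ A <;> by_cases h2 : (p.2, q.2 + q.1 * p.2) ∈ A <;>
      simp [h1, h2, hslice]
  have hsq : volume A * volume A ≤ ENNReal.ofReal (K * Real.pi) * volume A := by
    calc volume A * volume A
        = ∫⁻ q : ℝ × ℝ, ∫⁻ p in slice q ×ˢ slice q, ENNReal.ofReal |p.1 - p.2| := by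
          rw [← lintegral_indicator_one hA, lintegral_mul_lintegral_eq_lintegral_line_pairs
            (measurable_one.indicator hA), lintegral_congr hpair]
      _ ≤ ∫⁻ q : ℝ × ℝ, ENNReal.ofReal (K / (1 + q.1 ^ 2)) * volume (slice q) :=
          lintegral_mono fun q => h q.1 q.2
      _ = ENNReal.ofReal (K * Real.pi) * volume A := by
          rw [lintegral_mul_volume_line_slice hA (w := fun m => ENNReal.ofReal (K / (1 + m ^ 2)))
            (by fun_prop), lintegral_ofReal_div_one_add_sq hK]
  rcases eq_or_ne (volume A) 0 with h0 | h0
  · exact h0.trans_le zero_le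
  · exact (ENNReal.mul_le_mul_iff_left h0 hfin).1 hsq

/- At an odd number of nodes the Chebyshev–Gauss quadrature has `0` as a node. -/
lemma pi_div_mul_eval_zero_le_integral {m : ℕ} {P : Polynomial ℝ}
    (hdeg : P.natDegree < 2 * (2 * m + 1)) (hpos : ∀ x ∈ Set.Icc (-1 : ℝ) 1, 0 ≤ P.eval x) :
    Real.pi / (2 * m + 1 : ℕ) * P.eval 0 ≤ ∫ x in (-1 : ℝ)..1, P.eval x * √(1 - x ^ 2)⁻¹ := by
  have hquad := Polynomial.Chebyshev.integral_eq_sumZeroes (n := 2 * m + 1) (by lia)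
    (Polynomial.degree_le_natDegree.trans_lt (by exact_mod_cast hdeg))
  rw [Polynomial.Chebyshev.integral_measureT, Polynomial.Chebyshev.sumZeroes] at hquad
  rw [hquad]
  set node : ℕ → ℝ := fun i => Real.cos ((2 * i + 1) / (2 * (2 * m + 1 : ℕ)) * Real.pi)
  have hnode : node m = 0 := by
    refine (congrArg Real.cos ?_).trans Real.cos_pi_div_two
    push_cast
    field_simp
  gcongr
  rw [← hnode]
  exact Finset.single_le_sum (f := fun i => P.eval (node i))
    (fun i _ => hpos _ ⟨Real.neg_one_le_cos _, Real.cos_le_one _⟩)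
    (Finset.mem_range.2 (by lia))

lemma one_sub_sq_mul_sqrt_inv_le_one {x : ℝ} (hx : x ∈ Set.Icc (-1 : ℝ) 1) :
    (1 - x ^ 2) * √(1 - x ^ 2)⁻¹ ≤ 1 := by
  have : 0 ≤ 1 - x ^ 2 := by nlinarith [hx.1, hx.2]
  rw [Real.sqrt_inv, ← div_eq_mul_inv, Real.div_sqrt, Real.sqrt_le_one]
  linarith [sq_nonneg x]

lemma pi_mul_eval_zero_le_integral {d : ℕ} {r : Polynomial ℝ} (hr : r.natDegree ≤ d)
    (hpos : ∀ x ∈ Set.Icc (-1 : ℝ) 1, 0 ≤ r.eval x) :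
    Real.pi * r.eval 0 ≤ (2 * d + 3) * ∫ x in (-1 : ℝ)..1, r.eval x := by
  have hdeg : (r * (1 - Polynomial.X ^ 2)).natDegree < 2 * (2 * (d + 1) + 1) := by
    have h2 : (1 - Polynomial.X ^ 2 : Polynomial ℝ).natDegree ≤ 2 := by compute_degree
    have := (Polynomial.natDegree_mul_le (p := r) (q := 1 - Polynomial.X ^ 2)).trans
      (add_le_add hr h2)
    lia
  have heval : ∀ x : ℝ, (r * (1 - Polynomial.X ^ 2)).eval x = r.eval x * (1 - x ^ 2) := by simp
  have hquad := pi_div_mul_eval_zero_le_integral hdeg fun x hx => by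
    rw [heval]
    exact mul_nonneg (hpos x hx) (by nlinarith [hx.1, hx.2])
  have hle : ∫ x in (-1 : ℝ)..1, (r * (1 - Polynomial.X ^ 2)).eval x * √(1 - x ^ 2)⁻¹ ≤
      ∫ x in (-1 : ℝ)..1, r.eval x := by
    refine intervalIntegral.integral_mono_on (by norm_num)
      (Polynomial.Chebyshev.intervalIntegrable_sqrt_one_sub_sq_inv.continuousOn_mul
        (Polynomial.continuous _).continuousOn)
      (r.continuous.intervalIntegrable _ _) fun x hx => ?_
    rw [heval, mul_assoc]
    exact mul_le_of_le_one_right (hpos x hx) (one_sub_sq_mul_sqrt_inv_le_one hx)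
  have h := hquad.trans hle
  rw [heval, div_mul_eq_mul_div, div_le_iff₀ (by positivity)] at h
  push_cast at h
  linarith

lemma eval_zero_le_integral {d : ℕ} {r : Polynomial ℝ} (hr : r.natDegree ≤ d)
    (hpos : ∀ x ∈ Set.Icc (-(1 / 2) : ℝ) (1 / 2), 0 ≤ r.eval x) :
    r.eval 0 ≤ (2 * d + 3) * ∫ x in (-(1 / 2) : ℝ)..(1 / 2), r.eval x := by
  have heval : ∀ x, (r.comp (Polynomial.C (1 / 2) * Polynomial.X)).eval x = r.eval (x / 2) :=
    fun x => by simp [div_eq_inv_mul]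
  have hdeg : (r.comp (Polynomial.C (1 / 2) * Polynomial.X)).natDegree ≤ d :=
    Polynomial.natDegree_comp_le.trans <| (Nat.mul_le_mul hr
      ((Polynomial.natDegree_C_mul_le _ _).trans Polynomial.natDegree_X_le)).trans_eq (mul_one d)
  have h := pi_mul_eval_zero_le_integral hdeg fun x hx => by
    rw [heval]
    exact hpos _ ⟨by linarith [hx.1], by linarith [hx.2]⟩
  simp only [heval, zero_div] at h
  rw [intervalIntegral.integral_comp_div (fun x => r.eval x) two_ne_zero, smul_eq_mul,
    neg_div] at h
  nlinarith [Real.pi_gt_three, hpos 0 (by norm_num)]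

/-- The factors of the monomial `x ^ α`, with `Q i` substituted for `x i`, homogenized to degree `d`
by factors `D`. -/
noncomputable def homogenizedFactors {σ S : Type*} (d : ℕ) (D : S) (Q : σ → S) (α : σ →₀ ℕ) :
    Multiset S :=
  Multiset.replicate (d - α.degree) D + α.toMultiset.map Q

lemma card_homogenizedFactors {σ S : Type*} {d : ℕ} (D : S) (Q : σ → S) {α : σ →₀ ℕ}
    (hα : α.degree ≤ d) : (homogenizedFactors d D Q α).card = d := by
  simp only [homogenizedFactors, Multiset.card_add, Multiset.card_replicate, Multiset.card_map,
    Finsupp.card_toMultiset]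
  exact Nat.sub_add_cancel hα

lemma prod_map_homogenizedFactors {σ S T : Type*} [CommMonoid T] {d : ℕ} {D : S} {Q : σ → S}
    {α : σ →₀ ℕ} (hα : α.degree ≤ d) {φ : S → T} {x : σ → T} (h : ∀ i, φ (Q i) = φ D * x i) :
    ((homogenizedFactors d D Q α).map φ).prod = φ D ^ d * α.prod fun i k => x i ^ k := by
  have hx : (α.toMultiset.map x).prod = α.prod fun i k => x i ^ k := by
    rw [Finsupp.toMultiset_map, Finsupp.prod_toMultiset,
      Finsupp.prod_mapDomain_index (fun _ => pow_zero _) fun _ _ _ => pow_add _ _ _]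
  simp only [homogenizedFactors, Multiset.map_add, Multiset.map_replicate, Multiset.prod_add,
    Multiset.prod_replicate, Multiset.map_map, Function.comp_apply, h, Multiset.prod_map_mul, hx,
    Multiset.map_const', Finsupp.card_toMultiset]
  rw [← mul_assoc, ← pow_add]
  congr 2
  exact Nat.sub_add_cancel hα

lemma degree_le_of_mem_support {σ K : Type*} [CommSemiring K] {p : MvPolynomial σ K} {d : ℕ}
    (hp : p.totalDegree ≤ d) {α : σ →₀ ℕ} (hα : α ∈ p.support) : α.degree ≤ d :=
  (le_totalDegree hα).trans hp

lemma exists_polynomial_homogenized_substitution {σ K : Type*} [CommRing K] {p : MvPolynomial σ K}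
    {d e : ℕ} (hp : p.totalDegree ≤ d) {D : Polynomial K} {Q : σ → Polynomial K}
    (hD : D.natDegree ≤ e) (hQ : ∀ i, (Q i).natDegree ≤ e) :
    ∃ R : Polynomial K, R.natDegree ≤ d * e ∧
      (∀ t : σ → K, (∀ i, (Q i).coeff e = D.coeff e * t i) →
        R.coeff (d * e) = D.coeff e ^ d * eval t p) ∧
      ∀ (s : K) (x : σ → K), (∀ i, (Q i).eval s = D.eval s * x i) →
        R.eval s = D.eval s ^ d * eval x p := by
  have hfactor : ∀ α, ∀ q ∈ homogenizedFactors d D Q α, q.natDegree ≤ e := by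
    intro α q hq
    rcases Multiset.mem_add.1 hq with h | h
    · rwa [Multiset.eq_of_mem_replicate h]
    · obtain ⟨i, -, rfl⟩ := Multiset.mem_map.1 h
      exact hQ i
  refine ⟨∑ α ∈ p.support, Polynomial.C (coeff α p) * (homogenizedFactors d D Q α).prod,
    Polynomial.natDegree_sum_le_of_forall_le _ _ fun α hα => ?_, fun t ht => ?_, fun s x hx => ?_⟩
  · refine (Polynomial.natDegree_C_mul_le _ _).trans
      ((Polynomial.natDegree_multiset_prod_le _).trans ?_)
    refine (Multiset.sum_le_card_nsmul _ e fun k hk => ?_).trans_eq ?_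
    · obtain ⟨q, hq, rfl⟩ := Multiset.mem_map.1 hk
      exact hfactor α q hq
    · rw [Multiset.card_map, card_homogenizedFactors D Q (degree_le_of_mem_support hp hα),
        smul_eq_mul]
  · rw [Polynomial.finsetSum_coeff, eval_eq, Finset.mul_sum]
    refine Finset.sum_congr rfl fun α hα => ?_
    have hdeg := degree_le_of_mem_support hp hα
    have htop := Polynomial.coeff_multiset_prod_of_natDegree_le _ e (hfactor α)
    rw [card_homogenizedFactors D Q hdeg,
      prod_map_homogenizedFactors (φ := fun q : Polynomial K => q.coeff e) hdeg ht] at htop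
    rw [Polynomial.coeff_C_mul, htop, mul_left_comm]
    rfl
  · rw [Polynomial.eval_finsetSum, eval_eq, Finset.mul_sum]
    refine Finset.sum_congr rfl fun α hα => ?_
    rw [Polynomial.eval_mul, Polynomial.eval_C, Polynomial.eval_multiset_prod,
      prod_map_homogenizedFactors (degree_le_of_mem_support hp hα) hx, mul_left_comm]
    rfl

/-- The inverse stereographic projection of the plane onto the ellipsoid spanned by `x`, `y` and
`t`, with `t` as its pole. -/
noncomputable def stereo {E : Type*} [AddCommGroup E] [Module ℝ E] (x y t : E) (w : ℝ × ℝ) : E :=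
  (1 + (w.1 ^ 2 + w.2 ^ 2))⁻¹ •
    ((2 * w.1) • x + (2 * w.2) • y + (w.1 ^ 2 + w.2 ^ 2 - 1) • t)

lemma continuous_stereo {E : Type*} [AddCommGroup E] [Module ℝ E] [TopologicalSpace E]
    [ContinuousAdd E] [ContinuousSMul ℝ E] :
    Continuous fun z : ((E × E) × E) × ℝ × ℝ => stereo z.1.1.1 z.1.1.2 z.1.2 z.2 :=
  Continuous.smul (Continuous.inv₀ (by fun_prop) fun z => by positivity) (by fun_prop)

/-- The height, in units of the pole `t`, of the points `stereo x y t w` with `w` of squared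
norm `q`. -/
noncomputable def stereoHeight (q : ℝ) : ℝ := (q - 1) / (1 + q)

lemma sqrt_one_sub_stereoHeight_sq {r : ℝ} (hr : 0 ≤ r) :
    √(1 - stereoHeight (r ^ 2) ^ 2) = 2 * r / (1 + r ^ 2) := by
  rw [← Real.sqrt_sq (by positivity : 0 ≤ 2 * r / (1 + r ^ 2)), stereoHeight]
  congr 1
  field_simp
  ring

lemma stereo_polar {E : Type*} [AddCommGroup E] [Module ℝ E] (x y t : E) {r : ℝ} (hr : 0 ≤ r)
    (θ : ℝ) : stereo x y t (r * Real.cos θ, r * Real.sin θ) =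
      stereoHeight (r ^ 2) • t +
        √(1 - stereoHeight (r ^ 2) ^ 2) • (Real.cos θ • x + Real.sin θ • y) := by
  have hsq : (r * Real.cos θ) ^ 2 + (r * Real.sin θ) ^ 2 = r ^ 2 := by
    linear_combination r ^ 2 * Real.cos_sq_add_sin_sq θ
  rw [sqrt_one_sub_stereoHeight_sq hr]
  simp only [stereo, hsq, stereoHeight]
  module

lemma hasDerivAt_stereoHeight_sq (r : ℝ) :
    HasDerivAt (fun r => stereoHeight (r ^ 2)) (4 * r / (1 + r ^ 2) ^ 2) r := by
  have hsq : HasDerivAt (fun r : ℝ => r ^ 2) (2 * r) r := by simpa using hasDerivAt_pow 2 r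
  refine ((hsq.sub_const 1).div (hsq.const_add 1) (by positivity)).congr_deriv ?_
  congr 1
  ring

lemma exists_polynomial_stereo_line {σ : Type*} {d : ℕ} {p : MvPolynomial σ ℝ}
    (hp : p.totalDegree ≤ d) (x y t : σ → ℝ) (m c : ℝ) :
    ∃ R : Polynomial ℝ, R.natDegree ≤ d * 2 ∧ R.coeff (d * 2) = (1 + m ^ 2) ^ d * eval t p ∧
      ∀ s, R.eval s =
        (1 + (s ^ 2 + (c + m * s) ^ 2)) ^ d * eval (stereo x y t (s, c + m * s)) p := by
  let quad (a b e : ℝ) : Polynomial ℝ :=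
    Polynomial.C a * Polynomial.X ^ 2 + Polynomial.C b * Polynomial.X + Polynomial.C e
  have hcoeff (a b e : ℝ) : (quad a b e).coeff 2 = a := by simp [quad]
  have heval (a b e s : ℝ) : (quad a b e).eval s = a * s ^ 2 + b * s + e := by simp [quad]
  obtain ⟨R, hdeg, htop, hR⟩ := exists_polynomial_homogenized_substitution hp
    (D := quad (1 + m ^ 2) (2 * c * m) (1 + c ^ 2))
    (Q := fun i => quad ((1 + m ^ 2) * t i) (2 * x i + 2 * m * y i + 2 * c * m * t i)
      (2 * c * y i + (c ^ 2 - 1) * t i))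
    Polynomial.natDegree_quadratic_le fun i => Polynomial.natDegree_quadratic_le
  refine ⟨R, hdeg, ?_, fun s => ?_⟩
  · rw [htop t fun i => by rw [hcoeff, hcoeff], hcoeff]
  · rw [hR s (stereo x y t (s, c + m * s)) fun i => ?_, heval]
    · ring_nf
    · have hD : 1 + (s ^ 2 + (c + m * s) ^ 2) ≠ 0 := by positivity
      simp only [heval, stereo, Pi.smul_apply, Pi.add_apply, smul_eq_mul]
      field_simp
      ring

lemma measurableSet_disk {r : ℝ} : MeasurableSet {w : ℝ × ℝ | w.1 ^ 2 + w.2 ^ 2 ≤ r} :=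
  measurableSet_le (by fun_prop) measurable_const

lemma volume_disk_ne_top {r : ℝ} : volume {w : ℝ × ℝ | w.1 ^ 2 + w.2 ^ 2 ≤ r} ≠ ⊤ := by
  refine ((measure_mono (t := Metric.closedBall 0 √r) fun w hw => ?_).trans_lt
    measure_closedBall_lt_top).ne
  rw [mem_closedBall_zero_iff, Prod.norm_def]
  exact max_le (Real.abs_le_sqrt ((le_add_of_nonneg_right (sq_nonneg _)).trans hw))
    (Real.abs_le_sqrt ((le_add_of_nonneg_left (sq_nonneg _)).trans hw))

lemma mul_rpow_div_le_add {θ a b : ℝ} (hθ : 0 ≤ θ) (hθ1 : θ ≤ 1) (ha : 0 ≤ a) (hb : 0 < b) :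
    b * (a / b) ^ θ ≤ a + b := by
  have hgm := Real.geom_mean_le_arith_mean2_weighted hθ (sub_nonneg.2 hθ1) (div_nonneg ha hb.le)
    zero_le_one (add_sub_cancel _ _)
  rw [Real.one_rpow, mul_one] at hgm
  have hle : (a / b) ^ θ ≤ a / b + 1 := by
    nlinarith [div_nonneg ha hb.le]
  calc b * (a / b) ^ θ ≤ b * (a / b + 1) := by gcongr
    _ = a + b := by field_simp

section Sublevel

variable {σ : Type*} {d : ℕ} {p : MvPolynomial σ ℝ} {x y t : σ → ℝ}

lemma measurableSet_stereo_sublevel {v : ℝ} :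
    MeasurableSet {w : ℝ × ℝ | eval (stereo x y t w) p ≤ v} :=
  (isClosed_le ((MvPolynomial.continuous_eval p).comp (continuous_stereo.comp
    (by fun_prop : Continuous fun w : ℝ × ℝ => (((x, y), t), w)))) continuous_const).measurableSet

lemma volume_stereo_sublevel_le (hd : 0 < d) (hp : p.totalDegree ≤ d)
    (hpos : ∀ x, 0 ≤ eval x p) (ht : 0 < eval t p) {v η : ℝ} (hη : 0 < η)
    (hv : 5 ^ d * v ≤ eval t p * η ^ d) :
    volume ({w : ℝ × ℝ | w.1 ^ 2 + w.2 ^ 2 ≤ 4} ∩ {w | eval (stereo x y t w) p ≤ v}) ≤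
      ENNReal.ofReal (32 * η * Real.pi) := by
  have hmeas := (measurableSet_disk (r := 4)).inter
    (measurableSet_stereo_sublevel (p := p) (x := x) (y := y) (t := t) (v := v))
  refine volume_le_of_forall_line_slice hmeas (measure_ne_top_of_subset Set.inter_subset_left
    volume_disk_ne_top) (by positivity) fun m c => ?_
  obtain ⟨R, hdeg, htop, hR⟩ := exists_polynomial_stereo_line hp x y t m c
  have hm : 0 < 1 + m ^ 2 := by positivity
  have hδ : √(η / (1 + m ^ 2)) ^ 2 = η / (1 + m ^ 2) := Real.sq_sqrt (by positivity)
  have hslice := setLIntegral_abs_sub_le_of_abs_eval_le (N := d * 2) (by lia) hdeg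
    (by rw [htop]; positivity) (Real.sqrt_pos.2 (div_pos hη hm))
    (hmeas.preimage (f := fun s : ℝ => (s, c + m * s)) (by fun_prop)) fun s hs => ?_
  · rwa [hδ, ← mul_div_assoc] at hslice
  · obtain ⟨hdisk, hlevel⟩ := hs
    simp only [Set.mem_ofPred_eq] at hdisk hlevel
    have hnn := hpos (stereo x y t (s, c + m * s))
    rw [hR, abs_of_nonneg (by positivity), htop, mul_comm d 2, pow_mul, hδ, div_pow]
    calc (1 + (s ^ 2 + (c + m * s) ^ 2)) ^ d * eval (stereo x y t (s, c + m * s)) p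
        ≤ 5 ^ d * v := by gcongr; linarith
      _ ≤ eval t p * η ^ d := hv
      _ = (1 + m ^ 2) ^ d * eval t p * (η ^ d / (1 + m ^ 2) ^ d) := by field_simp

lemma ofReal_mul_volume_stereo_sublevel_le (hd : 0 < d) (hp : p.totalDegree ≤ d)
    (hpos : ∀ x, 0 ≤ eval x p) {μ τ : ℝ} (hμ : 0 < μ) (hτ : 0 < τ) :
    ENNReal.ofReal (eval t p) *
      volume ({w : ℝ × ℝ | w.1 ^ 2 + w.2 ^ 2 ≤ 4} ∩
        {w | eval (stereo x y t w) p ≤ τ ^ d * μ}) ≤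
      ENNReal.ofReal (160 * Real.pi * τ * (μ + eval t p)) := by
  rcases (hpos t).eq_or_lt with ht | ht
  · simp [← ht]
  have hvol := volume_stereo_sublevel_le (x := x) (y := y) (v := τ ^ d * μ)
    (η := 5 * τ * (μ / eval t p) ^ (d : ℝ)⁻¹) hd hp hpos ht (by positivity) (le_of_eq ?_)
  · refine (mul_le_mul_right hvol _).trans ?_
    rw [← ENNReal.ofReal_mul ht.le]
    refine ENNReal.ofReal_le_ofReal ?_
    have hd1 : (1 : ℝ) ≤ d := by exact_mod_cast hd
    calc eval t p * (32 * (5 * τ * (μ / eval t p) ^ (d : ℝ)⁻¹) * Real.pi)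
        = 160 * Real.pi * τ * (eval t p * (μ / eval t p) ^ (d : ℝ)⁻¹) := by ring
      _ ≤ _ := by
        gcongr
        exact mul_rpow_div_le_add (by positivity) (inv_le_one_of_one_le₀ hd1) hμ.le ht
  · rw [mul_pow, mul_pow, Real.rpow_inv_natCast_pow (by positivity) hd.ne']
    field_simp

end Sublevel

lemma setLIntegral_Ioc_le_setLIntegral_stereoHeight (H : ℝ → ENNReal) :
    ∫⁻ s in Set.Ioc (-(1 / 2) : ℝ) (1 / 2), H s ≤
      ∫⁻ r in Set.Ioo (0 : ℝ) 2, ENNReal.ofReal (4 * r) * H (stereoHeight (r ^ 2)) := by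
  have himage : Set.Ioc (-(1 / 2) : ℝ) (1 / 2) ⊆
      (fun r => stereoHeight (r ^ 2)) '' Set.Ioo 0 2 := by
    intro s hs
    have hlt : 0 < 1 - s := by linarith [hs.2]
    have hpos : 0 < (1 + s) / (1 - s) := div_pos (by linarith [hs.1]) hlt
    refine ⟨√((1 + s) / (1 - s)), ⟨Real.sqrt_pos.2 hpos, ?_⟩, ?_⟩
    · rw [Real.sqrt_lt' two_pos, div_lt_iff₀ hlt]
      linarith [hs.2]
    · simp only [stereoHeight, Real.sq_sqrt hpos.le]
      field_simp
      ring
  have hinj : Set.InjOn (fun r : ℝ => stereoHeight (r ^ 2)) (Set.Ioo 0 2) := by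
    intro a ha b hb hab
    simp only [stereoHeight] at hab
    rw [div_eq_div_iff (by positivity) (by positivity)] at hab
    exact (pow_left_inj₀ ha.1.le hb.1.le two_ne_zero).1 (by linarith)
  calc ∫⁻ s in Set.Ioc (-(1 / 2) : ℝ) (1 / 2), H s
      ≤ ∫⁻ s in (fun r : ℝ => stereoHeight (r ^ 2)) '' Set.Ioo 0 2, H s := lintegral_mono_set himage
    _ = ∫⁻ r in Set.Ioo (0 : ℝ) 2, ENNReal.ofReal |4 * r / (1 + r ^ 2) ^ 2| *
          H (stereoHeight (r ^ 2)) :=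
        lintegral_image_eq_lintegral_abs_deriv_mul measurableSet_Ioo
          (fun r _ => (hasDerivAt_stereoHeight_sq r).hasDerivWithinAt) hinj H
    _ ≤ _ := by
        refine setLIntegral_mono' measurableSet_Ioo fun r hr => ?_
        have hr0 := hr.1
        gcongr
        rw [abs_of_nonneg (by positivity)]
        exact div_le_self (by positivity) (one_le_pow₀ (by nlinarith))

lemma lintegral_radial {G : ℝ → ENNReal} (hG : Measurable G) :
    ∫⁻ w : ℝ × ℝ, G (w.1 ^ 2 + w.2 ^ 2) =
      ENNReal.ofReal (2 * Real.pi) * ∫⁻ r in Set.Ioi (0 : ℝ), ENNReal.ofReal r * G (r ^ 2) := by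
  have hpolar : ∀ p : ℝ × ℝ, ENNReal.ofReal p.1 • G ((polarCoord.symm p).1 ^ 2 +
      (polarCoord.symm p).2 ^ 2) = (ENNReal.ofReal p.1 * G (p.1 ^ 2)) * 1 := by
    intro p
    rw [polarCoord_symm_apply, smul_eq_mul, mul_one]
    congr 2
    linear_combination p.1 ^ 2 * Real.sin_sq_add_cos_sq p.2
  rw [← lintegral_comp_polarCoord_symm, polarCoord_target, Measure.volume_eq_prod,
    ← Measure.prod_restrict, lintegral_congr hpolar,
    lintegral_prod_mul (f := fun r : ℝ => ENNReal.ofReal r * G (r ^ 2)) (g := fun _ : ℝ => 1)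
      (by fun_prop) (by fun_prop), lintegral_one, Measure.restrict_apply_univ, Real.volume_Ioo,
    mul_comm]
  congr 2
  ring

/- Archimedes' hat-box theorem, as an inequality: on the disk the area form dominates the height
measure of the sphere. -/
lemma pi_mul_setLIntegral_Ioc_le_setLIntegral_disk {H : ℝ → ENNReal} (hH : Measurable H) :
    ENNReal.ofReal Real.pi * ∫⁻ s in Set.Ioc (-(1 / 2) : ℝ) (1 / 2), H s ≤
      2 * ∫⁻ w in {w : ℝ × ℝ | w.1 ^ 2 + w.2 ^ 2 ≤ 4}, H (stereoHeight (w.1 ^ 2 + w.2 ^ 2)) := by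
  have hmeas : Measurable stereoHeight := by
    unfold stereoHeight
    fun_prop
  set G : ℝ → ENNReal := (Set.Iic 4).indicator fun q => H (stereoHeight q)
  have hGmeas : Measurable G := (hH.comp hmeas).indicator measurableSet_Iic
  have hG : ∀ r ∈ Set.Ioo (0 : ℝ) 2, H (stereoHeight (r ^ 2)) = G (r ^ 2) := by
    intro r hr
    have hmem : r ^ 2 ∈ Set.Iic (4 : ℝ) := Set.mem_Iic.2 (by nlinarith [hr.1, hr.2])
    exact (Set.indicator_of_mem hmem fun q => H (stereoHeight q)).symm
  have hdisk : ∫⁻ w in {w : ℝ × ℝ | w.1 ^ 2 + w.2 ^ 2 ≤ 4}, H (stereoHeight (w.1 ^ 2 + w.2 ^ 2)) =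
      ∫⁻ w : ℝ × ℝ, G (w.1 ^ 2 + w.2 ^ 2) := by
    rw [← lintegral_indicator measurableSet_disk]
    rfl
  rw [hdisk, lintegral_radial hGmeas]
  calc ENNReal.ofReal Real.pi * ∫⁻ s in Set.Ioc (-(1 / 2) : ℝ) (1 / 2), H s
      ≤ ENNReal.ofReal Real.pi *
          ∫⁻ r in Set.Ioo (0 : ℝ) 2, ENNReal.ofReal (4 * r) * H (stereoHeight (r ^ 2)) := by
        exact mul_le_mul_right (setLIntegral_Ioc_le_setLIntegral_stereoHeight H) _
    _ = ENNReal.ofReal Real.pi *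
          ∫⁻ r in Set.Ioo (0 : ℝ) 2, 4 * (ENNReal.ofReal r * G (r ^ 2)) := by
        congr 1
        refine setLIntegral_congr_fun measurableSet_Ioo fun r hr => ?_
        simp only [hG r hr, ENNReal.ofReal_mul zero_le_four, ENNReal.ofReal_ofNat, mul_assoc]
    _ ≤ ENNReal.ofReal Real.pi * (4 * ∫⁻ r in Set.Ioi (0 : ℝ), ENNReal.ofReal r * G (r ^ 2)) := by
        rw [lintegral_const_mul _ (by fun_prop)]
        gcongr
        exact Set.Ioo_subset_Ioi_self
    _ = 2 * (ENNReal.ofReal (2 * Real.pi) *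
          ∫⁻ r in Set.Ioi (0 : ℝ), ENNReal.ofReal r * G (r ^ 2)) := by
        rw [ENNReal.ofReal_mul two_pos.le, ENNReal.ofReal_ofNat]
        ring

/-- Invariance of `γ ⊗ γ` under rotations, the only property of centred Gaussian measures that the
small ball estimate needs. -/
def RotationInvariant {E : Type*} [NormedAddCommGroup E] [NormedSpace ℝ E] [MeasurableSpace E]
    (γ : Measure E) : Prop :=
  ∀ θ, MeasurePreserving (ContinuousLinearMap.rotation θ : E × E →L[ℝ] E × E) (γ.prod γ) (γ.prod γ)

/-- The noise operator `T_s f` with correlation `s`, in Mehler's form. -/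
noncomputable def noise {E : Type*} [AddCommGroup E] [Module ℝ E] [MeasurableSpace E]
    (γ : Measure E) (s : ℝ) (f : E → ENNReal) (x : E) : ENNReal :=
  ∫⁻ y, f (s • x + √(1 - s ^ 2) • y) ∂γ

section Noise

variable {E : Type*} [NormedAddCommGroup E] [NormedSpace ℝ E] [MeasurableSpace E] {γ : Measure E}
  [IsProbabilityMeasure γ]

lemma RotationInvariant.measurePreserving_cos_smul_add_sin_smul (hγ : RotationInvariant γ) (θ : ℝ) :
    MeasurePreserving (fun z : E × E => Real.cos θ • z.1 + Real.sin θ • z.2) (γ.prod γ) γ :=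
  measurePreserving_fst.comp (hγ θ)

variable [BorelSpace E]

lemma RotationInvariant.measurePreserving_neg (hγ : RotationInvariant γ) :
    MeasurePreserving (fun x : E => -x) γ γ := by
  refine ⟨by fun_prop, ?_⟩
  calc γ.map (fun x => -x) = ((γ.prod γ).map Prod.fst).map fun x => -x := by
        rw [measurePreserving_fst.map_eq]
    _ = (γ.prod γ).map fun z => Real.cos Real.pi • z.1 + Real.sin Real.pi • z.2 := by
        rw [Measure.map_map (by fun_prop) (by fun_prop)]
        simp only [Function.comp_def, Real.cos_pi, Real.sin_pi, neg_smul, one_smul, zero_smul,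
          add_zero]
    _ = γ := (hγ.measurePreserving_cos_smul_add_sin_smul Real.pi).map_eq

lemma RotationInvariant.measurePreserving_reflection (hγ : RotationInvariant γ) (θ : ℝ) :
    MeasurePreserving (fun z : E × E => (Real.cos θ • z.1 + Real.sin θ • z.2,
      Real.sin θ • z.1 - Real.cos θ • z.2)) (γ.prod γ) (γ.prod γ) := by
  convert ((MeasurePreserving.id γ).prod hγ.measurePreserving_neg).comp (hγ θ) using 2 with z
  simp only [ContinuousLinearMap.rotation_apply, Prod.map_apply, id_eq, Function.comp_apply,
    neg_add, neg_smul, neg_neg, sub_eq_add_neg]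

lemma RotationInvariant.noise_stereoHeight (hγ : RotationInvariant γ) {f : E → ENNReal}
    (hf : Measurable f) (t : E) (w : ℝ × ℝ) : noise γ (stereoHeight (w.1 ^ 2 + w.2 ^ 2)) f t =
      ∫⁻ z, f (stereo z.1 z.2 t w) ∂γ.prod γ := by
  obtain ⟨r, θ, hr, rfl⟩ : ∃ r θ : ℝ, 0 ≤ r ∧ w = (r * Real.cos θ, r * Real.sin θ) :=
    ⟨‖(⟨w.1, w.2⟩ : ℂ)‖, Complex.arg ⟨w.1, w.2⟩, norm_nonneg _,
      Prod.ext (Complex.norm_mul_cos_arg ⟨w.1, w.2⟩).symm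
        (Complex.norm_mul_sin_arg ⟨w.1, w.2⟩).symm⟩
  have hsq : (r * Real.cos θ) ^ 2 + (r * Real.sin θ) ^ 2 = r ^ 2 := by
    linear_combination r ^ 2 * Real.cos_sq_add_sin_sq θ
  simp only [stereo_polar _ _ t hr]
  rw [(hγ.measurePreserving_cos_smul_add_sin_smul θ).lintegral_comp
    (f := fun v => f (stereoHeight (r ^ 2) • t + √(1 - stereoHeight (r ^ 2) ^ 2) • v))
    (by fun_prop), hsq, noise]

variable [SecondCountableTopology E]

lemma measurable_noise {f : E → ENNReal} (hf : Measurable f) :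
    Measurable fun z : ℝ × E => noise γ z.1 f z.2 :=
  Measurable.lintegral_prod_right' (f := fun z : (ℝ × E) × E =>
    f (z.1.1 • z.1.2 + √(1 - z.1.1 ^ 2) • z.2)) (by fun_prop)

/- With `s = cos θ`, the reflection `(x, y) ↦ (s x + √(1 - s²) y, √(1 - s²) x - s y)` exchanges the
two sides. -/
lemma RotationInvariant.lintegral_mul_noise_comm (hγ : RotationInvariant γ) {s : ℝ}
    (hs : s ∈ Set.Icc (-1 : ℝ) 1) {f g : E → ENNReal} (hf : Measurable f) (hg : Measurable g) :
    ∫⁻ x, f x * noise γ s g x ∂γ = ∫⁻ x, g x * noise γ s f x ∂γ := by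
  have hpair {f g : E → ENNReal} (hf : Measurable f) (hg : Measurable g) :
      ∫⁻ x, f x * noise γ s g x ∂γ =
        ∫⁻ z, f z.1 * g (s • z.1 + √(1 - s ^ 2) • z.2) ∂γ.prod γ := by
    rw [lintegral_prod _ (by fun_prop)]
    refine lintegral_congr fun x => ?_
    exact (lintegral_const_mul (f x) (by fun_prop)).symm
  rw [hpair hf hg, hpair hg hf, ← (hγ.measurePreserving_reflection (Real.arccos s)).lintegral_comp
    (by fun_prop)]
  refine lintegral_congr fun z => ?_
  rw [Real.sin_arccos, Real.cos_arccos hs.1 hs.2, mul_comm]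
  congr 2
  have hsq : √(1 - s ^ 2) ^ 2 = 1 - s ^ 2 := Real.sq_sqrt (by nlinarith [hs.1, hs.2])
  calc s • (s • z.1 + √(1 - s ^ 2) • z.2) + √(1 - s ^ 2) • (√(1 - s ^ 2) • z.1 - s • z.2)
      = (s ^ 2 + √(1 - s ^ 2) ^ 2) • z.1 := by module
    _ = z.1 := by rw [hsq, add_sub_cancel, one_smul]

end Noise

lemma eval_aeval {σ τ K : Type*} [CommSemiring K] (F : σ → MvPolynomial τ K) (p : MvPolynomial σ K)
    (y : τ → K) : eval y (aeval F p) = eval (fun i => eval y (F i)) p :=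
  eval₂Hom_bind₁ (RingHom.id K) y F p

lemma totalDegree_aeval_le {σ τ K : Type*} [CommSemiring K] {F : σ → MvPolynomial τ K}
    (hF : ∀ i, (F i).totalDegree ≤ 1) (p : MvPolynomial σ K) :
    (aeval F p).totalDegree ≤ p.totalDegree := by
  rw [aeval_def, eval₂_eq]
  refine totalDegree_finsetSum_le fun m hm => (totalDegree_mul _ _).trans ?_
  rw [algebraMap_eq, totalDegree_C, zero_add]
  refine (totalDegree_finsetProd _ _).trans ((Finset.sum_le_sum fun i _ => ?_).trans
    (le_totalDegree hm))
  exact (totalDegree_pow _ _).trans (by simpa using Nat.mul_le_mul_left (m i) (hF i))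

/- The odd powers of `v` cancel, and the even ones are polynomials in `u` on the circle. -/
lemma exists_polynomial_eval_add_eval_neg_of_circle {K : Type*} [CommRing K] {d : ℕ}
    {q : MvPolynomial (Fin 2) K} (hq : q.totalDegree ≤ d) :
    ∃ a : Polynomial K, a.natDegree ≤ d ∧
      ∀ u v : K, u ^ 2 + v ^ 2 = 1 → eval ![u, v] q + eval ![u, -v] q = a.eval u := by
  let term (m : Fin 2 →₀ ℕ) : Polynomial K := if Even (m 1) then
    Polynomial.C (2 * coeff m q) * Polynomial.X ^ m 0 * (1 - Polynomial.X ^ 2) ^ (m 1 / 2) else 0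
  refine ⟨∑ m ∈ q.support, term m, Polynomial.natDegree_sum_le_of_forall_le _ _ fun m hm => ?_,
    fun u v huv => ?_⟩
  · have hm : m 0 + m 1 ≤ d := by
      simpa [Finsupp.degree_eq_sum, Fin.sum_univ_two] using degree_le_of_mem_support hq hm
    by_cases he : Even (m 1)
    · simp only [term, he, if_true]
      obtain ⟨j, hj⟩ := he
      rw [hj] at hm ⊢
      compute_degree
      lia
    · simp only [term, he, if_false, Polynomial.natDegree_zero, Nat.zero_le]
  · rw [eval_eq', eval_eq', ← Finset.sum_add_distrib, Polynomial.eval_finsetSum]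
    refine Finset.sum_congr rfl fun m _ => ?_
    simp only [Fin.prod_univ_two, Matrix.cons_val_zero, Matrix.cons_val_one, term]
    by_cases he : Even (m 1)
    · obtain ⟨j, hj⟩ := even_iff_exists_two_mul.1 he
      have hv : 1 - u ^ 2 = v ^ 2 := by linear_combination -huv
      rw [if_pos he, he.neg_pow, hj, Nat.mul_div_cancel_left j two_pos, pow_mul]
      simp only [Polynomial.eval_mul, Polynomial.eval_C, Polynomial.eval_pow, Polynomial.eval_X,
        Polynomial.eval_sub, Polynomial.eval_one, hv]
      ring
    · rw [if_neg he, (Nat.not_even_iff_odd.1 he).neg_pow, Polynomial.eval_zero]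
      ring

lemma exists_polynomial_eval_add_eval_of_circle {σ : Type*} {d : ℕ} {p : MvPolynomial σ ℝ}
    (hp : p.totalDegree ≤ d) (x y : σ → ℝ) :
    ∃ a : Polynomial ℝ, a.natDegree ≤ d ∧ ∀ s ∈ Set.Icc (-1 : ℝ) 1,
      eval (s • x + √(1 - s ^ 2) • y) p + eval (s • x + √(1 - s ^ 2) • (-y)) p = a.eval s := by
  let F (i : σ) : MvPolynomial (Fin 2) ℝ := C (x i) * X 0 + C (y i) * X 1
  have hF (i : σ) : (F i).totalDegree ≤ 1 :=
    (totalDegree_add _ _).trans (max_le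
      ((totalDegree_mul _ _).trans_eq (by rw [totalDegree_C, totalDegree_X]))
      ((totalDegree_mul _ _).trans_eq (by rw [totalDegree_C, totalDegree_X])))
  have heval (u v : ℝ) : eval ![u, v] (aeval F p) = eval (u • x + v • y) p := by
    rw [eval_aeval]
    congr 2
    ext i
    simp only [F, map_add, map_mul, eval_C, eval_X, Matrix.cons_val_zero, Matrix.cons_val_one,
      Pi.add_apply, Pi.smul_apply, smul_eq_mul, mul_comm]
  obtain ⟨a, ha, hcircle⟩ :=
    exists_polynomial_eval_add_eval_neg_of_circle ((totalDegree_aeval_le hF p).trans hp)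
  refine ⟨a, ha, fun s hs => ?_⟩
  rw [← hcircle s √(1 - s ^ 2) (by rw [Real.sq_sqrt (by nlinarith [hs.1, hs.2])]; ring), heval,
    heval, smul_neg, neg_smul]

lemma ofReal_eval_add_eval_neg_le_setLIntegral {σ : Type*} {d : ℕ} {p : MvPolynomial σ ℝ}
    (hp : p.totalDegree ≤ d) (hpos : ∀ x, 0 ≤ eval x p) (x y : σ → ℝ) :
    ENNReal.ofReal (eval y p) + ENNReal.ofReal (eval (-y) p) ≤ ENNReal.ofReal (2 * d + 3) *
      ∫⁻ s in Set.Ioc (-(1 / 2) : ℝ) (1 / 2), (ENNReal.ofReal (eval (s • x + √(1 - s ^ 2) • y) p) +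
        ENNReal.ofReal (eval (s • x + √(1 - s ^ 2) • (-y)) p)) := by
  obtain ⟨a, hdeg, ha⟩ := exists_polynomial_eval_add_eval_of_circle hp x y
  have hsub : Set.Icc (-(1 / 2) : ℝ) (1 / 2) ⊆ Set.Icc (-1) 1 :=
    Set.Icc_subset_Icc (by norm_num) (by norm_num)
  have hnonneg : ∀ s ∈ Set.Icc (-(1 / 2) : ℝ) (1 / 2), 0 ≤ a.eval s := fun s hs => by
    rw [← ha s (hsub hs)]
    exact add_nonneg (hpos _) (hpos _)
  have hzero : eval y p + eval (-y) p = a.eval 0 := by simpa using ha 0 (by norm_num)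
  have hintegral : ∫⁻ s in Set.Ioc (-(1 / 2) : ℝ) (1 / 2),
      (ENNReal.ofReal (eval (s • x + √(1 - s ^ 2) • y) p) +
        ENNReal.ofReal (eval (s • x + √(1 - s ^ 2) • (-y)) p)) =
      ENNReal.ofReal (∫ s in (-(1 / 2) : ℝ)..(1 / 2), a.eval s) := by
    rw [intervalIntegral.integral_of_le (by norm_num), ofReal_integral_eq_lintegral_ofReal
      ((Continuous.integrableOn_Icc (by fun_prop)).mono_set Set.Ioc_subset_Icc_self)
      ((ae_restrict_iff' measurableSet_Ioc).2 (.of_forall fun s hs =>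
        hnonneg s (Set.Ioc_subset_Icc_self hs)))]
    refine setLIntegral_congr_fun measurableSet_Ioc fun s hs => ?_
    rw [← ENNReal.ofReal_add (hpos _) (hpos _), ha s (hsub (Set.Ioc_subset_Icc_self hs))]
  rw [hintegral, ← ENNReal.ofReal_add (hpos _) (hpos _), hzero,
    ← ENNReal.ofReal_mul (by positivity)]
  exact ENNReal.ofReal_le_ofReal (eval_zero_le_integral hdeg hnonneg)

lemma measurable_ofReal_eval {σ : Type*} [Countable σ] (p : MvPolynomial σ ℝ) :
    Measurable fun x => ENNReal.ofReal (eval x p) :=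
  (MvPolynomial.continuous_eval p).measurable.ennreal_ofReal

section SmallBall

variable {σ : Type*} [Fintype σ] {γ : Measure (σ → ℝ)} [IsProbabilityMeasure γ] {d : ℕ}
  {p : MvPolynomial σ ℝ}

lemma lintegral_eval_le_setLIntegral_noise (hγ : RotationInvariant γ) (hp : p.totalDegree ≤ d)
    (hpos : ∀ x, 0 ≤ eval x p) (x : σ → ℝ) :
    ∫⁻ y, ENNReal.ofReal (eval y p) ∂γ ≤ ENNReal.ofReal (2 * d + 3) *
      ∫⁻ s in Set.Ioc (-(1 / 2) : ℝ) (1 / 2), noise γ s (fun y => ENNReal.ofReal (eval y p)) x := by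
  have hq := measurable_ofReal_eval p
  set q : (σ → ℝ) → ENNReal := fun y => ENNReal.ofReal (eval y p)
  have hsymm {F : (σ → ℝ) → ENNReal} (hF : Measurable F) :
      ∫⁻ y, (F y + F (-y)) ∂γ = 2 * ∫⁻ y, F y ∂γ := by
    rw [lintegral_add_left hF, hγ.measurePreserving_neg.lintegral_comp hF, two_mul]
  have htwice : 2 * ∫⁻ y, q y ∂γ ≤
      2 * (ENNReal.ofReal (2 * d + 3) *
        ∫⁻ s in Set.Ioc (-(1 / 2) : ℝ) (1 / 2), noise γ s q x) :=
    calc 2 * ∫⁻ y, q y ∂γ = ∫⁻ y, (q y + q (-y)) ∂γ := (hsymm hq).symm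
      _ ≤ ∫⁻ y, (ENNReal.ofReal (2 * d + 3) * ∫⁻ s in Set.Ioc (-(1 / 2) : ℝ) (1 / 2),
            (q (s • x + √(1 - s ^ 2) • y) + q (s • x + √(1 - s ^ 2) • (-y)))) ∂γ :=
          lintegral_mono fun y => ofReal_eval_add_eval_neg_le_setLIntegral hp hpos x y
      _ = ENNReal.ofReal (2 * d + 3) * ∫⁻ s in Set.Ioc (-(1 / 2) : ℝ) (1 / 2),
            ∫⁻ y, (q (s • x + √(1 - s ^ 2) • y) + q (s • x + √(1 - s ^ 2) • (-y))) ∂γ := by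
          rw [lintegral_const_mul _ (by fun_prop), lintegral_lintegral_swap (by fun_prop)]
      _ = ENNReal.ofReal (2 * d + 3) *
            ∫⁻ s in Set.Ioc (-(1 / 2) : ℝ) (1 / 2), 2 * noise γ s q x := by
          refine congrArg _ (lintegral_congr fun s => ?_)
          exact hsymm (F := fun y => q (s • x + √(1 - s ^ 2) • y)) (by fun_prop)
      _ = 2 * (ENNReal.ofReal (2 * d + 3) *
            ∫⁻ s in Set.Ioc (-(1 / 2) : ℝ) (1 / 2), noise γ s q x) := by
          rw [lintegral_const_mul' _ _ ENNReal.ofNat_ne_top, mul_left_comm]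
  exact (ENNReal.mul_le_mul_iff_right two_ne_zero ENNReal.ofNat_ne_top).1 htwice

lemma setLIntegral_noise_indicator_le (hγ : RotationInvariant γ) {A : Set (σ → ℝ)}
    (hA : MeasurableSet A) (t : σ → ℝ) :
    ENNReal.ofReal Real.pi * ∫⁻ s in Set.Ioc (-(1 / 2) : ℝ) (1 / 2), noise γ s (A.indicator 1) t ≤
      2 * ∫⁻ z, volume ({w : ℝ × ℝ | w.1 ^ 2 + w.2 ^ 2 ≤ 4} ∩ {w | stereo z.1 z.2 t w ∈ A})
        ∂γ.prod γ := by
  have hone : Measurable (A.indicator (1 : (σ → ℝ) → ENNReal)) := measurable_one.indicator hA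
  have hstereo : Measurable fun z : (ℝ × ℝ) × (σ → ℝ) × (σ → ℝ) => stereo z.2.1 z.2.2 t z.1 :=
    (continuous_stereo.comp (by fun_prop :
      Continuous fun z : (ℝ × ℝ) × (σ → ℝ) × (σ → ℝ) => ((z.2, t), z.1))).measurable
  have hslice (z : (σ → ℝ) × (σ → ℝ)) :
      ∫⁻ w in {w : ℝ × ℝ | w.1 ^ 2 + w.2 ^ 2 ≤ 4}, A.indicator 1 (stereo z.1 z.2 t w) =
        volume ({w : ℝ × ℝ | w.1 ^ 2 + w.2 ^ 2 ≤ 4} ∩ {w | stereo z.1 z.2 t w ∈ A}) := by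
    have hpre : MeasurableSet {w | stereo z.1 z.2 t w ∈ A} :=
      hA.preimage (hstereo.comp measurable_prodMk_right)
    rw [Set.inter_comm, ← Measure.restrict_apply hpre, ← lintegral_indicator_one hpre]
    rfl
  calc ENNReal.ofReal Real.pi *
        ∫⁻ s in Set.Ioc (-(1 / 2) : ℝ) (1 / 2), noise γ s (A.indicator 1) t
      ≤ 2 * ∫⁻ w in {w : ℝ × ℝ | w.1 ^ 2 + w.2 ^ 2 ≤ 4},
          noise γ (stereoHeight (w.1 ^ 2 + w.2 ^ 2)) (A.indicator 1) t :=
        pi_mul_setLIntegral_Ioc_le_setLIntegral_disk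
          ((measurable_noise hone).comp measurable_prodMk_right)
    _ = 2 * ∫⁻ w in {w : ℝ × ℝ | w.1 ^ 2 + w.2 ^ 2 ≤ 4},
          (∫⁻ z, A.indicator 1 (stereo z.1 z.2 t w) ∂γ.prod γ) := by
        simp only [hγ.noise_stereoHeight hone]
    _ = 2 * ∫⁻ z, volume ({w : ℝ × ℝ | w.1 ^ 2 + w.2 ^ 2 ≤ 4} ∩
          {w | stereo z.1 z.2 t w ∈ A}) ∂γ.prod γ := by
        rw [lintegral_lintegral_swap (f := fun w (z : (σ → ℝ) × (σ → ℝ)) =>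
          A.indicator (1 : (σ → ℝ) → ENNReal) (stereo z.1 z.2 t w))
          (hone.comp hstereo).aemeasurable]
        simp only [hslice]

lemma ofReal_mul_setLIntegral_noise_indicator_le (hγ : RotationInvariant γ) (hd : 0 < d)
    (hp : p.totalDegree ≤ d) (hpos : ∀ x, 0 ≤ eval x p) {μ τ : ℝ} (hμ : 0 < μ) (hτ : 0 < τ)
    (t : σ → ℝ) :
    ENNReal.ofReal (eval t p) * ∫⁻ s in Set.Ioc (-(1 / 2) : ℝ) (1 / 2),
        noise γ s ({x | eval x p ≤ τ ^ d * μ}.indicator 1) t ≤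
      ENNReal.ofReal (320 * τ * (μ + eval t p)) := by
  have hA : MeasurableSet {x : σ → ℝ | eval x p ≤ τ ^ d * μ} :=
    (isClosed_le (MvPolynomial.continuous_eval p) continuous_const).measurableSet
  have hπ : ENNReal.ofReal Real.pi ≠ 0 := by simpa using Real.pi_pos
  refine (ENNReal.mul_le_mul_iff_right hπ ENNReal.ofReal_ne_top).1 ?_
  calc ENNReal.ofReal Real.pi * (ENNReal.ofReal (eval t p) *
        ∫⁻ s in Set.Ioc (-(1 / 2) : ℝ) (1 / 2),
          noise γ s ({x | eval x p ≤ τ ^ d * μ}.indicator 1) t)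
      ≤ ENNReal.ofReal (eval t p) * (2 * ∫⁻ z, volume ({w : ℝ × ℝ | w.1 ^ 2 + w.2 ^ 2 ≤ 4} ∩
          {w | eval (stereo z.1 z.2 t w) p ≤ τ ^ d * μ}) ∂γ.prod γ) := by
        rw [mul_left_comm]
        exact mul_le_mul_right (setLIntegral_noise_indicator_le hγ hA t) _
    _ = 2 * ∫⁻ z, ENNReal.ofReal (eval t p) * volume ({w : ℝ × ℝ | w.1 ^ 2 + w.2 ^ 2 ≤ 4} ∩
          {w | eval (stereo z.1 z.2 t w) p ≤ τ ^ d * μ}) ∂γ.prod γ := by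
        rw [lintegral_const_mul' _ _ ENNReal.ofReal_ne_top, mul_left_comm]
    _ ≤ 2 * ∫⁻ _, ENNReal.ofReal (160 * Real.pi * τ * (μ + eval t p)) ∂γ.prod γ := by
        gcongr with z
        exact ofReal_mul_volume_stereo_sublevel_le hd hp hpos hμ hτ
    _ = ENNReal.ofReal Real.pi * ENNReal.ofReal (320 * τ * (μ + eval t p)) := by
        rw [lintegral_const, measure_univ, mul_one, ← ENNReal.ofReal_ofNat,
          ← ENNReal.ofReal_mul two_pos.le, ← ENNReal.ofReal_mul Real.pi_pos.le]
        congr 1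
        ring

/- The noise operators are self-adjoint, so averaging the comparison of `∫ p` with `T_s p` over the
sublevel set `A` leaves `∫ p T_s 1_A`, which is small. -/
lemma measure_sublevel_mul_lintegral_le (hγ : RotationInvariant γ) (hd : 0 < d)
    (hp : p.totalDegree ≤ d) (hpos : ∀ x, 0 ≤ eval x p) {μ τ : ℝ} (hμ : 0 < μ) (hτ : 0 < τ) :
    γ {x | eval x p ≤ τ ^ d * μ} * ∫⁻ x, ENNReal.ofReal (eval x p) ∂γ ≤
      ENNReal.ofReal (2 * d + 3) * ∫⁻ t, ENNReal.ofReal (320 * τ * (μ + eval t p)) ∂γ := by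
  have hA : MeasurableSet {x : σ → ℝ | eval x p ≤ τ ^ d * μ} :=
    (isClosed_le (MvPolynomial.continuous_eval p) continuous_const).measurableSet
  have hsmall := ofReal_mul_setLIntegral_noise_indicator_le hγ hd hp hpos hμ hτ
  have hq := measurable_ofReal_eval p
  have hlower := lintegral_eval_le_setLIntegral_noise hγ hp hpos
  set A := {x : σ → ℝ | eval x p ≤ τ ^ d * μ}
  set q : (σ → ℝ) → ENNReal := fun y => ENNReal.ofReal (eval y p)
  have hone : Measurable (A.indicator (1 : (σ → ℝ) → ENNReal)) := measurable_one.indicator hA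
  have hswap {f g : (σ → ℝ) → ENNReal} (hf : Measurable f) (hg : Measurable g) :
      ∫⁻ x, f x * (∫⁻ s in Set.Ioc (-(1 / 2) : ℝ) (1 / 2), noise γ s g x) ∂γ =
        ∫⁻ s in Set.Ioc (-(1 / 2) : ℝ) (1 / 2), ∫⁻ x, f x * noise γ s g x ∂γ := by
    rw [← lintegral_lintegral_swap (f := fun x s => f x * noise γ s g x)
      ((hf.comp measurable_fst).mul ((measurable_noise hg).comp measurable_swap)).aemeasurable]
    exact lintegral_congr fun x =>
      (lintegral_const_mul _ ((measurable_noise hg).comp measurable_prodMk_right)).symm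
  calc γ A * ∫⁻ x, q x ∂γ = ∫⁻ x, (A.indicator 1 x * ∫⁻ y, q y ∂γ) ∂γ := by
        rw [lintegral_mul_const _ hone, lintegral_indicator_one hA]
    _ ≤ ∫⁻ x, ENNReal.ofReal (2 * d + 3) * (A.indicator 1 x *
          ∫⁻ s in Set.Ioc (-(1 / 2) : ℝ) (1 / 2), noise γ s q x) ∂γ := by
        refine lintegral_mono fun x => ?_
        rw [mul_left_comm]
        exact mul_le_mul_right (hlower x) _
    _ = ENNReal.ofReal (2 * d + 3) * ∫⁻ s in Set.Ioc (-(1 / 2) : ℝ) (1 / 2),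
          ∫⁻ x, A.indicator 1 x * noise γ s q x ∂γ := by
        rw [lintegral_const_mul' _ _ ENNReal.ofReal_ne_top, hswap hone hq]
    _ = ENNReal.ofReal (2 * d + 3) * ∫⁻ s in Set.Ioc (-(1 / 2) : ℝ) (1 / 2),
          ∫⁻ x, q x * noise γ s (A.indicator 1) x ∂γ := by
        congr 1
        exact setLIntegral_congr_fun measurableSet_Ioc fun s hs =>
          hγ.lintegral_mul_noise_comm ⟨by linarith [hs.1], by linarith [hs.2]⟩ hone hq
    _ = ENNReal.ofReal (2 * d + 3) * ∫⁻ x, q x *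
          (∫⁻ s in Set.Ioc (-(1 / 2) : ℝ) (1 / 2), noise γ s (A.indicator 1) x) ∂γ := by
        rw [hswap hq hone]
    _ ≤ _ := by
        gcongr with t
        exact hsmall t

lemma measure_eval_le_pow_mul_integral_le (hγ : RotationInvariant γ) (hd : 0 < d)
    (hp : p.totalDegree ≤ d) (hpos : ∀ x, 0 ≤ eval x p) (hint : Integrable (fun x => eval x p) γ)
    (hμ : 0 < ∫ x, eval x p ∂γ) {τ : ℝ} (hτ : 0 < τ) :
    γ {x | eval x p ≤ τ ^ d * ∫ y, eval y p ∂γ} ≤ ENNReal.ofReal (3200 * d * τ) := by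
  have hbound := measure_sublevel_mul_lintegral_le hγ hd hp hpos hμ hτ
  set μ := ∫ x, eval x p ∂γ
  have hsum : Integrable (fun t => μ + eval t p) γ := (integrable_const μ).add hint
  have hmean : ∫⁻ t, ENNReal.ofReal (320 * τ * (μ + eval t p)) ∂γ =
      ENNReal.ofReal (320 * τ * (μ + μ)) := by
    rw [← ofReal_integral_eq_lintegral_ofReal (hsum.const_mul (320 * τ))
      (.of_forall fun t => mul_nonneg (by positivity) (add_nonneg hμ.le (hpos t))),
      integral_const_mul, integral_add (integrable_const μ) hint, integral_const, probReal_univ,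
      one_smul]
  rw [hmean, ← ofReal_integral_eq_lintegral_ofReal hint (.of_forall hpos),
    ← ENNReal.ofReal_mul (by positivity)] at hbound
  refine (ENNReal.mul_le_mul_iff_left (by simpa using hμ) ENNReal.ofReal_ne_top).1
    (hbound.trans ?_)
  rw [← ENNReal.ofReal_mul (by positivity)]
  refine ENNReal.ofReal_le_ofReal ?_
  have hd1 : (1 : ℝ) ≤ d := by exact_mod_cast hd
  calc (2 * d + 3) * (320 * τ * (μ + μ)) ≤ (5 * d) * (320 * τ * (μ + μ)) := by
        gcongr
        linarith
    _ = 3200 * d * τ * μ := by ring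

theorem measure_eval_lt_pow_mul_integral_le (hγ : RotationInvariant γ) (hp : p.totalDegree ≤ d)
    (hpos : ∀ x, 0 ≤ eval x p) (hint : Integrable (fun x => eval x p) γ) {τ : ℝ} (hτ : 0 ≤ τ) :
    γ {x | eval x p < τ ^ d * ∫ y, eval y p ∂γ} ≤ ENNReal.ofReal (3200 * d * τ) := by
  have hempty (h : ∀ x, τ ^ d * ∫ y, eval y p ∂γ ≤ eval x p) :
      γ {x | eval x p < τ ^ d * ∫ y, eval y p ∂γ} ≤ ENNReal.ofReal (3200 * d * τ) := by
    have hset : {x | eval x p < τ ^ d * ∫ y, eval y p ∂γ} = ∅ :=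
      Set.eq_empty_of_forall_notMem fun x hx => (h x).not_gt hx
    rw [hset, measure_empty]
    exact zero_le
  rcases d.eq_zero_or_pos with rfl | hd
  · refine hempty fun x => ?_
    rw [totalDegree_eq_zero_iff_eq_C.1 (Nat.le_zero.1 hp)]
    simp
  rcases hτ.eq_or_lt with rfl | hτ
  · exact hempty fun x => by simpa [hd.ne'] using hpos x
  rcases (integral_nonneg hpos : 0 ≤ ∫ y, eval y p ∂γ).eq_or_lt with hμ | hμ
  · exact hempty fun x => by simpa [← hμ] using hpos x
  · exact (measure_mono fun x hx => (Set.mem_ofPred_eq ▸ hx : _ < _).le).trans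
      (measure_eval_le_pow_mul_integral_le hγ hd hp hpos hint hμ hτ)

end SmallBall

instance (n : ℕ) : IsProbabilityMeasure (gaussianN n) := by
  unfold gaussianN
  infer_instance

lemma isGaussian_gaussianN (n : ℕ) : IsGaussian (gaussianN n) := by
  have hcoord (i : Fin n) : HasGaussianLaw (fun x : Fin n → ℝ => x i) (gaussianN n) := by
    refine ⟨?_⟩
    rw [gaussianN, (measurePreserving_eval (fun _ : Fin n => gaussianReal 0 1) i).map_eq]
    infer_instance
  have hindep : iIndepFun (fun (i : Fin n) (x : Fin n → ℝ) => x i) (gaussianN n) :=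
    iIndepFun_pi (X := fun _ x => x) fun _ => by fun_prop
  simpa only [Measure.map_id'] using (hindep.hasGaussianLaw hcoord).isGaussian_map

lemma measurePreserving_neg_gaussianN (n : ℕ) :
    MeasurePreserving (fun x => -x) (gaussianN n) (gaussianN n) := by
  have hcoord : MeasurePreserving (fun t : ℝ => -t) (gaussianReal 0 1) (gaussianReal 0 1) :=
    ⟨by fun_prop, by rw [gaussianReal_map_neg, neg_zero]⟩
  exact measurePreserving_pi _ _ fun _ => hcoord

lemma rotationInvariant_gaussianN (n : ℕ) : RotationInvariant (gaussianN n) := by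
  intro θ
  have := isGaussian_gaussianN n
  refine ⟨by fun_prop, IsGaussian.map_rotation_eq_self_of_forall_strongDual_eq_zero
    (fun L => ?_) θ⟩
  have hodd : ∫ x, L x ∂gaussianN n = -∫ x, L x ∂gaussianN n :=
    calc ∫ x, L x ∂gaussianN n = ∫ x, L (-x) ∂gaussianN n :=
          ((measurePreserving_neg_gaussianN n).integral_comp'
            (f := MeasurableEquiv.neg (Fin n → ℝ)) L).symm
      _ = -∫ x, L x ∂gaussianN n := by simp only [map_neg, integral_neg]
  linarith

lemma integrable_eval_gaussianN {n : ℕ} (p : MvPolynomial (Fin n) ℝ) :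
    Integrable (fun x => eval x p) (gaussianN n) := by
  simp only [eval_eq']
  refine integrable_finsetSum _ fun m _ => Integrable.const_mul ?_ _
  refine Integrable.fintype_prod (f := fun i (t : ℝ) => t ^ m i) fun i => ?_
  have hmoment := (memLp_id_gaussianReal (μ := 0) (v := 1) (m i : NNReal)).integrable_norm_pow'
    (p := m i)
  exact hmoment.mono' (by fun_prop) (.of_forall fun t => (norm_pow t (m i)).le)

lemma exists_forall_integral_linearMap_eq {σ Ω : Type*} [Finite σ] [MeasurableSpace Ω]
    {ν : Measure Ω} {d : ℕ} {f : Ω → MvPolynomial σ ℝ} (hdeg : ∀ ω, (f ω).totalDegree ≤ d)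
    (hint : ∀ m, Integrable (fun ω => coeff m (f ω)) ν) :
    ∃ q : MvPolynomial σ ℝ, q.totalDegree ≤ d ∧
      ∀ Φ : MvPolynomial σ ℝ →ₗ[ℝ] ℝ, ∫ ω, Φ (f ω) ∂ν = Φ q := by
  have hfin : {m : σ →₀ ℕ | m.degree ≤ d}.Finite := Finsupp.finite_of_degree_le d
  have hf (ω : Ω) : f ω = ∑ m ∈ hfin.toFinset, coeff m (f ω) • monomial m 1 := by
    simp only [smul_monomial, smul_eq_mul, mul_one]
    refine (f ω).as_sum.trans (Finset.sum_subset (fun m hm => ?_) fun m _ hm => ?_)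
    · exact hfin.mem_toFinset.2 (degree_le_of_mem_support (hdeg ω) hm)
    · rw [notMem_support_iff.1 hm, monomial_zero]
  refine ⟨∑ m ∈ hfin.toFinset, (∫ ω, coeff m (f ω) ∂ν) • monomial m 1, ?_, fun Φ => ?_⟩
  · refine totalDegree_finsetSum_le fun m hm => (totalDegree_smul_le _ _).trans ?_
    exact (totalDegree_monomial_le _ _).trans (hfin.mem_toFinset.1 hm)
  · calc ∫ ω, Φ (f ω) ∂ν
        = ∫ ω, ∑ m ∈ hfin.toFinset, coeff m (f ω) * Φ (monomial m 1) ∂ν := by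
          refine integral_congr_ae (.of_forall fun ω => ?_)
          simpa only [map_sum, map_smul, smul_eq_mul] using congrArg Φ (hf ω)
      _ = ∑ m ∈ hfin.toFinset, (∫ ω, coeff m (f ω) ∂ν) * Φ (monomial m 1) := by
          rw [integral_finsetSum _ fun m _ => (hint m).mul_const _]
          simp only [integral_mul_const]
      _ = Φ (∑ m ∈ hfin.toFinset, (∫ ω, coeff m (f ω) ∂ν) • monomial m 1) := by
          simp only [map_sum, map_smul, smul_eq_mul]

lemma NiceFamily.memLp_coeff {n I d : ℕ} {g : (Fin I → ℝ) → MvPolynomial (Fin n) ℝ}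
    (hg : NiceFamily n I d g) (m : Fin n →₀ ℕ) :
    MemLp (fun υ => coeff m (g υ)) 2 (gaussianN I) := by
  obtain ⟨P, -, hP⟩ := hg.2 m
  simp only [hP]
  rw [memLp_two_iff_integrable_sq (MvPolynomial.continuous_eval P).aestronglyMeasurable]
  simp only [← map_pow]
  exact integrable_eval_gaussianN (P ^ 2)

section Zoom

variable {n : ℕ} (p : MvPolynomial (Fin n) ℝ) (lam : ℝ)

lemma eval_zoom (x y : Fin n → ℝ) :
    eval y (zoom p lam x) = eval (√(1 - lam) • x + √lam • y) p := by
  simp only [zoom, eval_aeval, map_add, map_mul, eval_C, eval_X]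
  rfl

lemma totalDegree_zoom_le (x : Fin n → ℝ) : (zoom p lam x).totalDegree ≤ p.totalDegree := by
  refine totalDegree_aeval_le (fun i => (totalDegree_add _ _).trans (max_le ?_ ?_)) p
  · exact (totalDegree_C _).trans_le zero_le_one
  · exact (totalDegree_mul _ _).trans (by rw [totalDegree_C, totalDegree_X])

lemma exists_map_eval_eq_zoom : ∃ q : MvPolynomial (Fin n) (MvPolynomial (Fin n) ℝ),
    ∀ x, map (eval x) q = zoom p lam x := by
  refine ⟨aeval (fun i => C (C √(1 - lam) * X i) + C (C √lam) * X i) p, fun x => ?_⟩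
  rw [zoom]
  induction p using MvPolynomial.induction_on with
  | C c => simp [algebraMap_eq]
  | add p q hp hq => simp only [map_add, hp, hq]
  | mul_X p i hp =>
    rw [map_mul, map_mul, map_mul, hp]
    simp

lemma integrable_coeff_zoom (m : Fin n →₀ ℕ) :
    Integrable (fun x => coeff m (zoom p lam x)) (gaussianN n) := by
  obtain ⟨q, hq⟩ := exists_map_eval_eq_zoom p lam
  simpa only [← hq, coeff_map] using integrable_eval_gaussianN (coeff m q)

lemma exists_eval_eq_integral_zoom : ∃ q : MvPolynomial (Fin n) ℝ,
    q.totalDegree ≤ p.totalDegree ∧ ∀ x, eval x q = ∫ y, eval y (zoom p lam x) ∂gaussianN n := by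
  obtain ⟨q, hq, hmean⟩ := exists_forall_integral_linearMap_eq (totalDegree_zoom_le p (1 - lam))
    (integrable_coeff_zoom p (1 - lam))
  refine ⟨q, hq, fun x => ?_⟩
  calc eval x q = ∫ y, eval x (zoom p (1 - lam) y) ∂gaussianN n :=
        (hmean (aeval x).toLinearMap).symm
    _ = ∫ y, eval y (zoom p lam x) ∂gaussianN n := by
        simp only [eval_zoom, sub_sub_cancel, add_comm]

variable {lam}

lemma integral_integral_zoom (h0 : 0 ≤ lam) (h1 : lam ≤ 1) :
    ∫ x, ∫ y, eval y (zoom p lam x) ∂gaussianN n ∂gaussianN n = ∫ x, eval x p ∂gaussianN n := by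
  have hrot := (rotationInvariant_gaussianN n).measurePreserving_cos_smul_add_sin_smul
    (Real.arccos √(1 - lam))
  rw [Real.sin_arccos, Real.cos_arccos (by linarith [Real.sqrt_nonneg (1 - lam)])
    (Real.sqrt_le_one.2 (by linarith)), Real.sq_sqrt (by linarith), sub_sub_cancel] at hrot
  have hint := hrot.integrable_comp_of_integrable (integrable_eval_gaussianN p)
  calc ∫ x, ∫ y, eval y (zoom p lam x) ∂gaussianN n ∂gaussianN n
      = ∫ z, eval (√(1 - lam) • z.1 + √lam • z.2) p ∂(gaussianN n).prod (gaussianN n) := by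
        simp only [eval_zoom]
        exact (integral_prod _ hint).symm
    _ = ∫ x, eval x p ∂gaussianN n := by
        conv_rhs => rw [← hrot.map_eq]
        exact (integral_map hrot.measurable.aemeasurable
          (MvPolynomial.continuous_eval p).aestronglyMeasurable).symm

end Zoom

lemma norm2sq_nonneg {n : ℕ} (p : MvPolynomial (Fin n) ℝ) : 0 ≤ norm2sq p :=
  integral_nonneg fun _ => sq_nonneg _

/-- The expectation `q ↦ E[q(x)]`, `x ∼ N(0,1)^n`, as a linear functional on polynomials. -/
noncomputable def gaussianMean (n : ℕ) : MvPolynomial (Fin n) ℝ →ₗ[ℝ] ℝ where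
  toFun q := ∫ x, eval x q ∂gaussianN n
  map_add' p q := by
    simp only [map_add]
    exact integral_add (integrable_eval_gaussianN p) (integrable_eval_gaussianN q)
  map_smul' c p := by
    simp only [smul_eval, integral_const_mul, RingHom.id_apply, smul_eq_mul]

lemma norm2sq_eq_gaussianMean {n : ℕ} (p : MvPolynomial (Fin n) ℝ) :
    norm2sq p = gaussianMean n (p ^ 2) := by
  simp only [norm2sq, gaussianMean, LinearMap.coe_mk, AddHom.coe_mk, map_pow]

lemma zoom_pow {n : ℕ} (p : MvPolynomial (Fin n) ℝ) (lam : ℝ) (x : Fin n → ℝ) (j : ℕ) :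
    zoom (p ^ j) lam x = zoom p lam x ^ j :=
  map_pow _ _ _

section RandomPolynomial

variable {Ω : Type*} [MeasurableSpace Ω] {ν : Measure Ω} {n k : ℕ}
  {g : Ω → MvPolynomial (Fin n) ℝ}

lemma integrable_coeff_sq {σ : Type*} {f : Ω → MvPolynomial σ ℝ}
    (hf : ∀ m, MemLp (fun ω => coeff m (f ω)) 2 ν) (m : σ →₀ ℕ) :
    Integrable (fun ω => coeff m (f ω ^ 2)) ν := by
  classical
  simp only [sq, coeff_mul]
  exact integrable_finsetSum _ fun ij _ => (hf ij.1).integrable_mul (hf ij.2)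

lemma exists_polynomial_integral_norm2sq_zoom (hdeg : ∀ ω, (g ω).totalDegree ≤ k)
    (hg : ∀ m, MemLp (fun ω => coeff m (g ω)) 2 ν) {lam : ℝ} (h0 : 0 ≤ lam) (h1 : lam ≤ 1) :
    ∃ p : MvPolynomial (Fin n) ℝ, p.totalDegree ≤ 2 * k ∧
      (∀ x, eval x p = ∫ ω, norm2sq (zoom (g ω) lam x) ∂ν) ∧
      ∫ x, eval x p ∂gaussianN n = ∫ ω, norm2sq (g ω) ∂ν := by
  obtain ⟨q, hq, hmean⟩ := exists_forall_integral_linearMap_eq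
    (fun ω => (totalDegree_pow (g ω) 2).trans (Nat.mul_le_mul_left 2 (hdeg ω)))
    (integrable_coeff_sq hg)
  obtain ⟨p, hp, heval⟩ := exists_eval_eq_integral_zoom q lam
  refine ⟨p, hp.trans hq, fun x => ?_, ?_⟩
  · simp only [norm2sq_eq_gaussianMean, ← zoom_pow]
    exact (heval x).trans (hmean (gaussianMean n ∘ₗ (aeval _).toLinearMap)).symm
  · simp only [heval, integral_integral_zoom q h0 h1, norm2sq_eq_gaussianMean]
    exact (hmean (gaussianMean n)).symm

end RandomPolynomial

theorem two_norm_retention_low_degree_general {Ω : Type*} [MeasurableSpace Ω] {ν : Measure Ω}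
    {n k : ℕ} {g : Ω → MvPolynomial (Fin n) ℝ} (hdeg : ∀ ω, (g ω).totalDegree ≤ k)
    (hg : ∀ m, MemLp (fun ω => coeff m (g ω)) 2 ν) {lam β : ℝ} (h0 : 0 ≤ lam) (h1 : lam ≤ 1)
    (hβ : 0 ≤ β) :
    gaussianN n {x | ∫ ω, norm2sq (zoom (g ω) lam x) ∂ν <
      (β / (6400 * k)) ^ (2 * k) * ∫ ω, norm2sq (g ω) ∂ν} ≤ ENNReal.ofReal β := by
  obtain ⟨p, hp, heval, hmean⟩ := exists_polynomial_integral_norm2sq_zoom hdeg hg h0 h1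
  have hpos (x : Fin n → ℝ) : 0 ≤ eval x p := by
    rw [heval]
    exact integral_nonneg fun ω => norm2sq_nonneg _
  simp only [← heval, ← hmean]
  refine (measure_eval_lt_pow_mul_integral_le (rotationInvariant_gaussianN n) hp hpos
    (integrable_eval_gaussianN p) (by positivity)).trans (ENNReal.ofReal_le_ofReal ?_)
  rcases k.eq_zero_or_pos with rfl | hk
  · simpa using hβ
  · refine le_of_eq ?_
    push_cast
    field_simp
    ring

/-- Two-norm retention for a nice distribution of degree-`k` polynomials: there is a
universal constant `C` such that for `0 ≤ λ ≤ 1` and `0 < β' < 1`, for `x ∼ N(0,1)^n`,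
except with probability at most `β'`, we have
`E_υ[‖(g_υ)_{λ|x}‖₂²] ≥ (β'/(C·k))^{2k}·E_υ[‖g_υ‖₂²]`. -/
theorem two_norm_retention_low_degree :
    ∃ C : ℝ, 1 ≤ C ∧
      ∀ (n I k : ℕ) (g : (Fin I → ℝ) → MvPolynomial (Fin n) ℝ), NiceFamily n I k g →
      ∀ lam β' : ℝ, 0 ≤ lam → lam ≤ 1 → 0 < β' → β' < 1 →
      gaussianN n {x | ¬ ((β' / (C * k)) ^ (2 * k) * (∫ υ, norm2sq (g υ) ∂(gaussianN I)) ≤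
          ∫ υ, norm2sq (zoom (g υ) lam x) ∂(gaussianN I))} ≤ ENNReal.ofReal β' := by
  refine ⟨6400, by norm_num, fun n I k g hg lam β' h0 h1 hβ _ => ?_⟩
  simpa only [not_le] using
    two_norm_retention_low_degree_general hg.1 hg.memLp_coeff h0 h1 hβ.le
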